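/- arXiv:1104.3090 — 2 statements merged into one kernel-verified Lean document; each statement's English description precedes it below -/
import Mathlib

section
/- Let G = (V,E) be a 2-vertex-connected simple graph on at least 3 vertices equipped with a removable pairing (R,P). Then G has a spanning closed walk of length at most (4/3)·|E| − (2/3)·|R|. -/
open SimpleGraph

/-!
Split every pair of `P` off its common endpoint: a new vertex takes over the two edges of the pair
and is joined to the old endpoint by a new edge. Since `G` is 2-vertex-connected and the endpoint
has a third edge, the resulting multigraph is bridgeless, and each new vertex has degree three.

In a bridgeless multigraph, every edge weight `w` admits an even edge set `F` with
`w(F) ≥ (2/3) w(E)`. Indeed, let `F` have maximum weight. Then `-w` with signs reversed on `F` is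
nonnegative on all cycles. Weighting the edges of `F` by `1` and the others by `2`, no cut is
dominated by one of its edges, so by Seymour's sums of circuits theorem these weights are a
nonnegative combination of cycles, and pairing them with the switched weights gives
`3 w(F) - 2 w(E) ≥ 0`. The form of Seymour's theorem needed here is proved by induction: as long as
a conservative weight has a negative edge, a shortest path argument in the style of Sebő finds a cut
on which it can be lowered everywhere except at one negative edge, where it is raised.

A large bonus at the new vertices makes `F` use two of the three edges there, hence at least one
edge of each pair. Take `w = -1` on `R` and `w = 1` elsewhere. Then `G` without `R \ F` is
connected, so traversing `F` once and the edges outside `F ∪ R` twice gives a spanning closed walk,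
of length `2|E| - 2|R| - w(F) ≤ (4/3)|E| - (2/3)|R|`.
-/

/-- A multigraph whose edges are the elements of `E`, loops and parallel edges allowed; `ends e` is
the unordered pair of endpoints of `e`. All of `E` is the edge set, unlike in Mathlib's `Graph`. -/
structure Multigraph (V E : Type*) where
  ends : E → Sym2 V

namespace Multigraph

open Finset
open scoped symmDiff

section SymmDiff

variable {E : Type*} [DecidableEq E]

/-- The weights `l` with signs reversed on `A`: the change in `l`-weight when `A` is switched along
`D` is the reversed weight of `D`, see `sum_symmDiff`. -/
def reverseOn {R : Type*} [Neg R] (A : Finset E) (l : E → R) (e : E) : R :=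
  if e ∈ A then -l e else l e

lemma sum_symmDiff {R : Type*} [AddCommGroup R] (A D : Finset E) (l : E → R) :
    ∑ e ∈ A ∆ D, l e = ∑ e ∈ A, l e + ∑ e ∈ D, reverseOn A l e := by
  have hD : ∑ e ∈ D, reverseOn A l e = ∑ e ∈ D \ A, l e - ∑ e ∈ A ∩ D, l e := by
    rw [← sum_inter_add_sum_sdiff D A, sub_eq_neg_add, ← sum_neg_distrib, inter_comm A D]
    congr 1
    · exact sum_congr rfl fun e he ↦ if_pos (mem_inter.1 he).2
    · exact sum_congr rfl fun e he ↦ if_neg (mem_sdiff.1 he).2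
  rw [symmDiff_def, sup_eq_union, sum_union (disjoint_sdiff.mono_left sdiff_le), hD,
    ← sum_inter_add_sum_sdiff A D l]
  abel

lemma sum_symmDiff_of_forall_eq_zero {R : Type*} [AddCommGroup R] {Z : Finset E} {l : E → R}
    (hZ : ∀ e ∈ Z, l e = 0) (D : Finset E) : ∑ e ∈ D ∆ Z, l e = ∑ e ∈ D, l e := by
  rw [sum_symmDiff, add_eq_left]
  exact sum_eq_zero fun e he ↦ by simp [reverseOn, hZ e he]

lemma even_sum_reverseOn_iff (A D : Finset E) (l : E → ℤ) :
    Even (∑ e ∈ D, reverseOn A l e) ↔ Even (∑ e ∈ D, l e) := by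
  refine Int.even_sub.1 ?_
  rw [← sum_sub_distrib]
  refine even_sum _ fun e _ ↦ ?_
  by_cases he : e ∈ A
  · exact ⟨-l e, by simp only [reverseOn, if_pos he]; ring⟩
  · simp [reverseOn, he]

lemma card_singleton_symmDiff_add (f : E) (D : Finset E) :
    #({f} ∆ D) + (if f ∈ D then 2 else 0) = #D + 1 := by
  by_cases hf : f ∈ D
  · have hD : {f} ∆ D = D.erase f := by ext e; by_cases e = f <;> simp_all [mem_symmDiff]
    rw [hD, if_pos hf, ← card_erase_add_one hf]
  · have hD : {f} ∆ D = insert f D := by ext e; by_cases e = f <;> simp_all [mem_symmDiff]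
    rw [hD, if_neg hf, card_insert_of_notMem hf]

lemma card_inter_eq_card_sdiff_inter_add {A B : Finset E} (h : A ⊆ B) (K : Finset E) :
    #(B ∩ K) = #((B \ A) ∩ K) + #(A ∩ K) := by
  rw [← card_union_of_disjoint
    (disjoint_sdiff_self_left.mono inter_subset_left inter_subset_left),
    ← union_inter_distrib_right, sdiff_union_of_subset h]

lemma forall_mem_symmDiff {p : E → Prop} {A B : Finset E} (hA : ∀ e ∈ A, p e)
    (hB : ∀ e ∈ B, p e) : ∀ e ∈ A ∆ B, p e := fun e he ↦
  (mem_symmDiff.1 he).elim (fun h ↦ hA e h.1) fun h ↦ hB e h.1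

end SymmDiff

variable {V E : Type*} (M : Multigraph V E)

open Classical in
/-- The edges with exactly one endpoint in `X`. -/
noncomputable def cut [Fintype E] (X : Finset V) : Finset E :=
  {e | ∃ x ∈ X, ∃ y ∉ X, M.ends e = s(x, y)}

section Boundary

variable [DecidableEq V]

/-- The mod 2 boundary of an edge set, i.e. its degree vector over `ZMod 2` (a loop counts twice,
hence not at all). -/
def boundary (F : Finset E) : V → ZMod 2 :=
  ∑ e ∈ F, (M.ends e).lift ⟨fun x y ↦ Pi.single x 1 + Pi.single y 1, fun _ _ ↦ add_comm _ _⟩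

/-- Membership of `F` in the cycle space: every vertex has even degree in `F`. -/
def IsEven (F : Finset E) : Prop := M.boundary F = 0

/-- `F` is a `{x, y}`-join: exactly `x` and `y` have odd degree in `F`, or none if `x = y`. -/
def Joins (F : Finset E) (x y : V) : Prop :=
  M.boundary F = Pi.single x 1 + Pi.single y 1

/-- Every vertex outside `X` has even degree in `F`. -/
def IsEvenOff (F : Finset E) (X : Finset V) : Prop :=
  ∀ v ∉ X, M.boundary F v = 0

/-- `F` is a join between `y` and the contracted vertex set `X`: outside `X`, exactly `y` has odd
degree in `F`. Nothing is required inside `X`, so for `y ∈ X` this means `IsEvenOff`. -/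
def JoinsTo (F : Finset E) (y : V) (X : Finset V) : Prop :=
  ∀ v ∉ X, M.boundary F v = (Pi.single y 1 : V → ZMod 2) v

variable {M} {A B F : Finset E} {X : Finset V} {x y z v : V} {e : E}

lemma joins_self : M.Joins F x x ↔ M.IsEven F := by
  rw [Joins, IsEven, ZModModule.add_self]

lemma Joins.symm (h : M.Joins F x y) : M.Joins F y x :=
  h.trans (add_comm _ _)

lemma joins_singleton (h : M.ends e = s(x, y)) : M.Joins {e} x y := by
  simp [Joins, boundary, h]

variable (M) in
@[simp] lemma boundary_empty : M.boundary ∅ = 0 := sum_empty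

lemma Joins.joinsTo (h : M.Joins F x y) (hx : x ∈ X) : M.JoinsTo F y X := fun v hv ↦ by
  rw [h, Pi.add_apply, Pi.single_eq_of_ne (ne_of_mem_of_not_mem hx hv).symm, zero_add]

lemma IsEvenOff.joinsTo (h : M.IsEvenOff F X) (hy : y ∈ X) : M.JoinsTo F y X := fun v hv ↦ by
  rw [h v hv, Pi.single_eq_of_ne (ne_of_mem_of_not_mem hy hv).symm]

lemma exists_mem_ends_of_boundary_ne_zero (h : M.boundary F y ≠ 0) :
    ∃ e ∈ F, ∃ z, M.ends e = s(y, z) := by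
  rw [boundary, Finset.sum_apply] at h
  obtain ⟨e, heF, he⟩ := exists_ne_zero_of_sum_ne_zero h
  refine ⟨e, heF, ?_⟩
  by_contra! hne
  induction hxz : M.ends e with | h x z
  have hx : y ≠ x := fun hx ↦ hne z (hx ▸ hxz)
  have hz : y ≠ z := fun hz ↦ hne x (hz ▸ hxz.trans Sym2.eq_swap)
  simp [hxz, hx, hz] at he

variable (M F) in
lemma sum_boundary_univ [Fintype V] : ∑ v, M.boundary F v = 0 := by
  simp only [boundary, Finset.sum_apply]
  rw [sum_comm]
  refine sum_eq_zero fun e _ ↦ ?_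
  induction M.ends e with | h x y
  simp [sum_add_distrib, CharTwo.add_self_eq_zero]

lemma joins_of_forall_ne [Finite V] (h : ∀ v ≠ x, M.boundary F v = (Pi.single y 1 : V → ZMod 2) v) :
    M.Joins F x y := by
  cases nonempty_fintype V
  have hx : M.boundary F x + ∑ v ∈ univ.erase x, (Pi.single y 1 : V → ZMod 2) v = 0 := by
    rw [← sum_congr rfl fun v hv ↦ h v (ne_of_mem_erase hv), add_sum_erase _ _ (mem_univ x),
      sum_boundary_univ]
  refine funext fun v ↦ ?_
  obtain rfl | hv := eq_or_ne v x
  · by_cases hy : v = y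
    · simp_all [CharTwo.add_self_eq_zero, sum_pi_single']
    · have hy' : y ≠ v := Ne.symm hy
      rw [sum_pi_single', if_pos (by simp [hy']), CharTwo.add_eq_zero] at hx
      simp [hx, hy]
  · simp [h v hv, hv]

variable [DecidableEq E]

lemma boundary_insert (he : e ∉ F) : M.boundary (insert e F) = M.boundary {e} + M.boundary F := by
  simp [boundary, he]

lemma boundary_sdiff (h : A ⊆ B) : M.boundary (B \ A) = M.boundary B + M.boundary A := by
  rw [boundary, boundary, ← sum_sdiff h, add_assoc]
  exact (add_eq_left.2 (ZModModule.add_self _)).symm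

lemma IsEvenOff.joinsTo_sdiff (hB : M.IsEvenOff B X) (hA : M.JoinsTo A y X) (h : A ⊆ B) :
    M.JoinsTo (B \ A) y X := fun v hv ↦ by
  rw [boundary_sdiff h, Pi.add_apply, hB v hv, zero_add, hA v hv]

lemma JoinsTo.isEvenOff_sdiff (hB : M.JoinsTo B y X) (hA : M.JoinsTo A y X) (h : A ⊆ B) :
    M.IsEvenOff (B \ A) X := fun v hv ↦ by
  rw [boundary_sdiff h, Pi.add_apply, hB v hv, hA v hv, CharTwo.add_self_eq_zero]

lemma IsEvenOff.sdiff (hB : M.IsEvenOff B X) (hA : M.IsEvenOff A X) (h : A ⊆ B) :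
    M.IsEvenOff (B \ A) X := fun v hv ↦ by
  rw [boundary_sdiff h, Pi.add_apply, hB v hv, hA v hv, add_zero]

lemma JoinsTo.isEvenOff_insert (hF : M.JoinsTo F y X) (he : M.JoinsTo {e} y X) (heF : e ∉ F) :
    M.IsEvenOff (insert e F) X := fun v hv ↦ by
  rw [boundary_insert heF, Pi.add_apply, he v hv, hF v hv, CharTwo.add_self_eq_zero]

variable (M A B) in
lemma boundary_symmDiff : M.boundary (A ∆ B) = M.boundary A + M.boundary B := by
  rw [boundary, sum_symmDiff]
  refine congrArg _ (sum_congr rfl fun e _ ↦ ?_)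
  rw [reverseOn, ZModModule.neg_eq_self, ite_self]

lemma IsEven.symmDiff (hA : M.IsEven A) (hB : M.IsEven B) : M.IsEven (A ∆ B) := by
  rw [IsEven, boundary_symmDiff, hA, hB, add_zero]

lemma Joins.trans (hA : M.Joins A x y) (hB : M.Joins B y z) : M.Joins (A ∆ B) x z := by
  rw [Joins, boundary_symmDiff, hA, hB, add_assoc, ← add_assoc (Pi.single y 1),
    ZModModule.add_self, zero_add]

lemma Joins.isEven_symmDiff (hA : M.Joins A x y) (hB : M.Joins B x y) : M.IsEven (A ∆ B) :=
  joins_self.1 (hA.trans hB.symm)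

lemma Joins.symmDiff_isEven (hA : M.Joins A x y) (hB : M.IsEven B) : M.Joins (A ∆ B) x y :=
  hA.trans (joins_self.2 hB)

end Boundary

section Cut

variable [Fintype E] {M} {X : Finset V} {x y : V} {e : E}

lemma exists_ends_of_mem_cut (he : e ∈ M.cut X) : ∃ x ∈ X, ∃ y ∉ X, M.ends e = s(x, y) := by
  simpa [cut] using he

lemma mem_cut_iff_of_ends (h : M.ends e = s(x, y)) : e ∈ M.cut X ↔ ¬(x ∈ X ↔ y ∈ X) := by
  constructor
  · intro he
    obtain ⟨a, ha, b, hb, hab⟩ := exists_ends_of_mem_cut he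
    rcases Sym2.eq_iff.1 (h.symm.trans hab) with ⟨rfl, rfl⟩ | ⟨rfl, rfl⟩ <;> tauto
  · intro hxy
    by_cases hx : x ∈ X
    · simpa [cut] using ⟨x, hx, y, by tauto, h⟩
    · simpa [cut] using ⟨y, by tauto, x, hx, h.trans Sym2.eq_swap⟩

variable [DecidableEq V] [DecidableEq E]

lemma sum_boundary (F : Finset E) (X : Finset V) :
    ∑ v ∈ X, M.boundary F v = (#(F ∩ M.cut X) : ZMod 2) := by
  simp only [boundary, Finset.sum_apply]
  rw [sum_comm, ← filter_mem_eq_inter, card_filter, Nat.cast_sum]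
  refine sum_congr rfl fun e _ ↦ ?_
  induction hxy : M.ends e with | h x y
  simp only [mem_cut_iff_of_ends hxy, Sym2.lift_mk, Pi.add_apply, sum_add_distrib, sum_pi_single']
  by_cases hx : x ∈ X <;> by_cases hy : y ∈ X <;> simp [hx, hy, CharTwo.add_self_eq_zero]

lemma IsEven.even_card_inter_cut {F : Finset E} (hF : M.IsEven F) (X : Finset V) :
    Even #(F ∩ M.cut X) := by
  rw [← ZMod.natCast_eq_zero_iff_even, ← sum_boundary, hF]
  simp

lemma Joins.odd_card_inter_cut {F : Finset E} (hF : M.Joins F x y) (hx : x ∉ X) (hy : y ∈ X) :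
    Odd #(F ∩ M.cut X) := by
  rw [← ZMod.natCast_eq_one_iff_odd, ← sum_boundary, hF]
  simp [sum_add_distrib, sum_pi_single', hx, hy]

/-- Walk from `y` along `D` until `X` is reached; the boundary condition says that the walk can only
get stuck inside `X`. -/
lemma JoinsTo.exists_subset {D : Finset E} (hD : M.JoinsTo D y X) (hy : y ∉ X) :
    ∃ Q ⊆ D, #(Q ∩ M.cut X) = 1 ∧ M.JoinsTo Q y X := by
  induction D using Finset.strongInduction generalizing y with | H D ih
  obtain ⟨e, heD, z, hez⟩ := exists_mem_ends_of_boundary_ne_zero (M := M) (F := D) (y := y)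
    (by simp [hD y hy])
  have hyz : M.Joins {e} y z := joins_singleton hez
  by_cases hz : z ∈ X
  · have hecut : e ∈ M.cut X := (mem_cut_iff_of_ends hez).2 (by tauto)
    exact ⟨{e}, singleton_subset_iff.2 heD, by simp [hecut], hyz.symm.joinsTo hz⟩
  have hecut : e ∉ M.cut X := fun h ↦ (mem_cut_iff_of_ends hez).1 h (by tauto)
  have hDz : M.JoinsTo (D \ {e}) z X := fun v hv ↦ by
    rw [boundary_sdiff (singleton_subset_iff.2 heD), Pi.add_apply, hD v hv, hyz, Pi.add_apply,
      CharTwo.add_cancel_left]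
  obtain ⟨Q, hQD, hQcut, hQ⟩ :=
    ih (D \ {e}) (sdiff_ssubset (singleton_subset_iff.2 heD) (singleton_nonempty e)) hDz hz
  have heQ : e ∉ Q := fun h ↦ by simpa using hQD h
  refine ⟨insert e Q, insert_subset heD (hQD.trans sdiff_subset), ?_, fun v hv ↦ ?_⟩
  · rwa [insert_inter_of_notMem hecut]
  · rw [boundary_insert heQ, hyz, Pi.add_apply, hQ v hv, Pi.add_apply, CharTwo.add_cancel_right]

end Cut

section Conservative

variable [DecidableEq V]

/-- No cycle has negative weight; every even edge set is a disjoint union of cycles. -/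
def IsConservative (l : E → ℤ) : Prop :=
  ∀ D, M.IsEven D → 0 ≤ ∑ e ∈ D, l e

/-- No cycle and no path starting at `r` has negative weight. -/
def IsConservativeFrom (l : E → ℤ) (r : V) : Prop :=
  ∀ D y, M.Joins D r y → 0 ≤ ∑ e ∈ D, l e

open Classical in
/-- The vertices that can be reached from `r` along edges of weight zero. -/
noncomputable def zeroComponent [Fintype V] (l : E → ℤ) (r : V) : Finset V :=
  {v | ∃ Z, (∀ e ∈ Z, l e = 0) ∧ M.Joins Z r v}

variable {M} [Fintype V] {l : E → ℤ} {r u x y : V} {D : Finset E} {e : E}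

lemma mem_zeroComponent :
    y ∈ M.zeroComponent l r ↔ ∃ Z, (∀ e ∈ Z, l e = 0) ∧ M.Joins Z r y := by
  simp [zeroComponent]

variable (M l r) in
lemma self_mem_zeroComponent : r ∈ M.zeroComponent l r :=
  mem_zeroComponent.2 ⟨∅, by simp, joins_self.2 (M.boundary_empty)⟩

lemma notMem_zeroComponent_of_sum_pos (hpos : ∀ D, M.Joins D u r → 0 < ∑ e ∈ D, l e) :
    u ∉ M.zeroComponent l r := fun hu ↦ by
  obtain ⟨Z, hZ, hZu⟩ := mem_zeroComponent.1 hu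
  exact (hpos Z hZu.symm).ne' (sum_eq_zero hZ)

lemma exists_joins_symmDiff [DecidableEq E] (hD : M.JoinsTo D y (M.zeroComponent l r)) :
    ∃ Z, (∀ e ∈ Z, l e = 0) ∧ M.Joins (D ∆ Z) r y := by
  suffices h : ∀ S ⊆ M.zeroComponent l r, ∀ D, M.JoinsTo D y (insert r S) →
      ∃ Z, (∀ e ∈ Z, l e = 0) ∧ M.Joins (D ∆ Z) r y from
    h _ Subset.rfl D (by rwa [insert_eq_of_mem (M.self_mem_zeroComponent l r)])
  intro S
  induction S using Finset.induction with
  | empty =>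
    exact fun _ D hD ↦ ⟨∅, by simp, joins_of_forall_ne fun v hv ↦ by
      simpa [boundary_symmDiff] using hD v (by simpa)⟩
  | insert w S _ ih =>
    intro hS D hD
    rw [insert_subset_iff] at hS
    by_cases hw : M.boundary D w = (Pi.single y 1 : V → ZMod 2) w
    · exact ih hS.2 D fun v hv ↦ (eq_or_ne v w).elim (fun h ↦ h ▸ hw) fun h ↦ hD v (by simp_all)
    obtain ⟨Z, hZ, hZw⟩ := mem_zeroComponent.1 hS.1
    obtain ⟨Z', hZ', hDZ⟩ := ih hS.2 (D ∆ Z) fun v hv ↦ by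
      rw [mem_insert, not_or] at hv
      rw [boundary_symmDiff, hZw, Pi.add_apply, Pi.add_apply, Pi.single_eq_of_ne hv.1, zero_add]
      obtain rfl | hvw := eq_or_ne v w
      · rw [Pi.single_eq_same]
        generalize M.boundary D v = a, (Pi.single y 1 : V → ZMod 2) v = b at hw
        decide +revert
      · rw [Pi.single_eq_of_ne hvw, add_zero, hD v (by simp [hvw, hv])]
    exact ⟨Z ∆ Z', forall_mem_symmDiff hZ hZ', symmDiff_assoc D Z Z' ▸ hDZ⟩

namespace IsConservativeFrom

lemma sum_nonneg (hl : M.IsConservativeFrom l r) (hD : M.JoinsTo D y (M.zeroComponent l r)) :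
    0 ≤ ∑ e ∈ D, l e := by
  classical
  obtain ⟨Z, hZ, hDZ⟩ := exists_joins_symmDiff hD
  exact sum_symmDiff_of_forall_eq_zero hZ D ▸ hl _ y hDZ

variable [Fintype E]

lemma pos_of_mem_cut (hl : M.IsConservativeFrom l r) (he : e ∈ M.cut (M.zeroComponent l r)) :
    0 < l e := by
  classical
  obtain ⟨x, hx, y, hy, hxy⟩ := exists_ends_of_mem_cut he
  obtain ⟨Z, hZ, hZx⟩ := mem_zeroComponent.1 hx
  have hry : M.Joins (Z ∆ {e}) r y := hZx.trans (joins_singleton hxy)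
  have hsum : ∑ e ∈ Z ∆ {e}, l e = l e := by
    rw [symmDiff_comm, sum_symmDiff_of_forall_eq_zero hZ, sum_singleton]
  refine (hsum ▸ hl _ y hry).lt_of_ne fun h ↦ hy ?_
  exact mem_zeroComponent.2 ⟨_, forall_mem_symmDiff hZ (by simpa using h.symm), hry⟩

lemma two_le_sum_of_mem_cut (hl : M.IsConservativeFrom l r)
    (heven : ∀ D, M.IsEven D → Even (∑ e ∈ D, l e)) (hD : M.IsEvenOff D (M.zeroComponent l r))
    (heD : e ∈ D) (he : e ∈ M.cut (M.zeroComponent l r)) : 2 ≤ ∑ e ∈ D, l e := by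
  classical
  obtain ⟨Z, hZ, hDZ⟩ := exists_joins_symmDiff (hD.joinsTo (M.self_mem_zeroComponent l r))
  obtain ⟨x, hx, y, _, hxy⟩ := exists_ends_of_mem_cut he
  have herest : 0 ≤ ∑ e ∈ D \ {e}, l e := hl.sum_nonneg <|
    hD.joinsTo_sdiff ((joins_singleton hxy).joinsTo hx) (singleton_subset_iff.2 heD)
  have hpos : 0 < ∑ e ∈ D, l e := by
    rw [← sum_sdiff (singleton_subset_iff.2 heD), sum_singleton]
    exact add_pos_of_nonneg_of_pos herest (hl.pos_of_mem_cut he)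
  obtain ⟨k, hk⟩ := sum_symmDiff_of_forall_eq_zero hZ D ▸ heven _ (joins_self.1 hDZ)
  lia

variable [DecidableEq E]

lemma card_inter_cut_le_sum (hl : M.IsConservativeFrom l r)
    (heven : ∀ D, M.IsEven D → Even (∑ e ∈ D, l e)) (hD : M.IsEvenOff D (M.zeroComponent l r)) :
    #(D ∩ M.cut (M.zeroComponent l r)) ≤ ∑ e ∈ D, l e := by
  induction D using Finset.strongInduction with | H D ih
  obtain hempty | ⟨e, he⟩ := (D ∩ M.cut (M.zeroComponent l r)).eq_empty_or_nonempty
  · exact hempty ▸ hl.sum_nonneg (hD.joinsTo (M.self_mem_zeroComponent l r))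
  obtain ⟨heD, hecut⟩ := mem_inter.1 he
  obtain ⟨x, hx, y, hy, hxy⟩ := exists_ends_of_mem_cut hecut
  have hey : M.JoinsTo {e} y (M.zeroComponent l r) := (joins_singleton hxy).joinsTo hx
  obtain ⟨Q, hQ, hQcut, hQy⟩ :=
    (hD.joinsTo_sdiff hey (singleton_subset_iff.2 heD)).exists_subset hy
  have heQ : e ∉ Q := fun h ↦ by simpa using hQ h
  have hQD : insert e Q ⊆ D := insert_subset heD (hQ.trans sdiff_subset)
  have heven_off : M.IsEvenOff (insert e Q) (M.zeroComponent l r) := hQy.isEvenOff_insert hey heQ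
  have htwo := hl.two_le_sum_of_mem_cut heven heven_off (mem_insert_self e Q) hecut
  have hrest := ih (D \ insert e Q) (sdiff_ssubset hQD (insert_nonempty e Q))
    (hD.sdiff heven_off hQD)
  have hcard : #(insert e Q ∩ M.cut (M.zeroComponent l r)) = 2 := by
    rw [insert_inter_of_mem hecut, card_insert_of_notMem (by simp [heQ]), hQcut]
  rw [← sum_sdiff hQD, card_inter_eq_card_sdiff_inter_add hQD, hcard, Nat.cast_add]
  exact add_le_add hrest htwo

lemma card_inter_cut_add_le_of_joins (hl : M.IsConservativeFrom l r)
    (heven : ∀ D, M.IsEven D → Even (∑ e ∈ D, l e)) (hu : u ∉ M.zeroComponent l r) {k : ℤ}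
    (hk : ∀ D, M.Joins D u r → k ≤ ∑ e ∈ D, l e) (hD : M.Joins D u r) :
    #(D ∩ M.cut (M.zeroComponent l r)) + k ≤ ∑ e ∈ D, l e + 1 := by
  have hDu := hD.symm.joinsTo (M.self_mem_zeroComponent l r)
  obtain ⟨Q, hQ, hQcut, hQu⟩ := hDu.exists_subset hu
  obtain ⟨Z, hZ, hQZ⟩ := exists_joins_symmDiff hQu
  have hkQ : k ≤ ∑ e ∈ Q, l e := sum_symmDiff_of_forall_eq_zero hZ Q ▸ hk _ hQZ.symm
  have hrest := hl.card_inter_cut_le_sum heven (hDu.isEvenOff_sdiff hQu hQ)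
  rw [← sum_sdiff hQ, card_inter_eq_card_sdiff_inter_add hQ, hQcut]
  push_cast
  lia

end IsConservativeFrom

end Conservative

section Reduction

variable {M} [DecidableEq V] [Finite V] [Fintype E] {l : E → ℤ} {u r : V}

omit [Finite V] [Fintype E] in
variable (M l) in
lemma exists_joins_forall_sum_le [Nonempty V] [Finite E] : ∃ A x y, M.Joins A x y ∧
    ∀ B u v, M.Joins B u v → ∑ e ∈ A, l e ≤ ∑ e ∈ B, l e := by
  let v : V := Classical.arbitrary V
  obtain ⟨A, ⟨x, y, hA⟩, hmin⟩ := Set.exists_min_image {A | ∃ x y, M.Joins A x y}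
    (fun A ↦ ∑ e ∈ A, l e) (Set.toFinite _) ⟨∅, v, v, joins_self.2 M.boundary_empty⟩
  exact ⟨A, x, y, hA, fun B u v hB ↦ hmin B ⟨u, v, hB⟩⟩

/-- The cut bounds the zero component of the switched weights `reverseOn A l`, for which `r` is a
root of a shortest path tree. -/
lemma IsConservative.exists_cut_of_forall_sum_le [DecidableEq E] {A : Finset E}
    (hl : M.IsConservative l) (heven : ∀ D, M.IsEven D → Even (∑ e ∈ D, l e))
    (hA : M.Joins A u r) (hneg : ∑ e ∈ A, l e < 0)
    (hmin : ∀ B x y, M.Joins B x y → ∑ e ∈ A, l e ≤ ∑ e ∈ B, l e) :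
    ∃ X, (∀ e ∈ M.cut X, 0 < reverseOn A l e) ∧ Odd #(A ∩ M.cut X) ∧
      ∀ D, M.IsEven D → #(A ∆ D ∩ M.cut X) ≤ ∑ e ∈ D, l e + 1 := by
  cases nonempty_fintype V
  have hswitch (D) : ∑ e ∈ A ∆ D, l e = ∑ e ∈ A, l e + ∑ e ∈ D, reverseOn A l e :=
    sum_symmDiff A D l
  have hrev : M.IsConservativeFrom (reverseOn A l) r := fun D y hD ↦ by
    linarith [hswitch D, hmin _ _ _ (hA.trans hD)]
  have hrev_even (D) (hD : M.IsEven D) : Even (∑ e ∈ D, reverseOn A l e) :=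
    (even_sum_reverseOn_iff A D l).2 (heven D hD)
  have hge (D) (hD : M.Joins D u r) : -∑ e ∈ A, l e ≤ ∑ e ∈ D, reverseOn A l e := by
    linarith [hswitch D, hl _ (hA.isEven_symmDiff hD)]
  have hu : u ∉ M.zeroComponent (reverseOn A l) r :=
    notMem_zeroComponent_of_sum_pos fun D hD ↦ by linarith [hge D hD]
  refine ⟨M.zeroComponent (reverseOn A l) r, fun e ↦ hrev.pos_of_mem_cut,
    hA.odd_card_inter_cut hu (M.self_mem_zeroComponent _ r), fun D hD ↦ ?_⟩
  have hsum := hswitch (A ∆ D)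
  rw [symmDiff_symmDiff_cancel_left] at hsum
  linarith [hrev.card_inter_cut_add_le_of_joins hrev_even hu hge (hA.symmDiff_isEven hD)]

lemma IsConservative.exists_reducing_cut [DecidableEq E] (hl : M.IsConservative l)
    (heven : ∀ D, M.IsEven D → Even (∑ e ∈ D, l e)) {e₀ : E} (hneg : l e₀ < 0) :
    ∃ X, ∃ f ∈ M.cut X, l f < 0 ∧ (∀ e ∈ M.cut X, e ≠ f → 0 < l e) ∧
      ∀ D, M.IsEven D → #(D ∩ M.cut X) ≤ ∑ e ∈ D, l e + if f ∈ D then 2 else 0 := by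
  obtain ⟨a, b, hab⟩ : ∃ a b, M.ends e₀ = s(a, b) := Sym2.exists.1 ⟨_, rfl⟩
  have : Nonempty V := ⟨a⟩
  obtain ⟨A, u, r, hA, hmin⟩ := M.exists_joins_forall_sum_le l
  have hAneg : ∑ e ∈ A, l e < 0 :=
    (hmin _ _ _ (joins_singleton hab)).trans_lt ((sum_singleton l e₀).trans_lt hneg)
  obtain ⟨X, hpos, hodd, hcut⟩ := hl.exists_cut_of_forall_sum_le heven hA hAneg hmin
  have hle : (#(A ∩ M.cut X) : ℤ) ≤ 1 := by
    have hempty := hcut ∅ M.boundary_empty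
    rwa [sum_empty, zero_add, ← bot_eq_empty, symmDiff_bot] at hempty
  obtain ⟨f, hf⟩ := card_eq_one.1 (le_antisymm (mod_cast hle) hodd.pos)
  obtain ⟨hfA, hfX⟩ : f ∈ A ∧ f ∈ M.cut X := mem_inter.1 (hf ▸ mem_singleton_self f)
  refine ⟨X, f, hfX, ?_, fun e he hef ↦ ?_, fun D hD ↦ ?_⟩
  · simpa [reverseOn, hfA] using hpos f hfX
  · have heA : e ∉ A := fun heA ↦ hef (mem_singleton.1 (hf ▸ mem_inter.2 ⟨heA, he⟩))
    simpa [reverseOn, heA] using hpos e he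
  · have hAD : A ∆ D ∩ M.cut X = {f} ∆ (D ∩ M.cut X) :=
      hf ▸ inf_symmDiff_distrib_right A D (M.cut X)
    have hcard := card_singleton_symmDiff_add f (D ∩ M.cut X)
    rw [← hAD] at hcard
    simp only [mem_inter, hfX, and_true] at hcard
    have := hcut D hD
    split_ifs at hcard ⊢ <;> lia

lemma IsConservative.exists_reduction [DecidableEq E] (hl : M.IsConservative l)
    (heven : ∀ D, M.IsEven D → Even (∑ e ∈ D, l e)) {e₀ : E} (hneg : l e₀ < 0) :
    ∃ X, ∃ f ∈ M.cut X, ∃ l' : E → ℤ, M.IsConservative l' ∧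
      (∀ D, M.IsEven D → Even (∑ e ∈ D, l' e)) ∧ ∑ e, (l' e).natAbs < ∑ e, (l e).natAbs ∧
      ∀ e, l e = l' e + (if e ∈ M.cut X then 1 else 0) - if e = f then 2 else 0 := by
  obtain ⟨X, f, hfX, hf, hpos, hcut⟩ := hl.exists_reducing_cut heven hneg
  let l' (e : E) : ℤ := l e - (if e ∈ M.cut X then 1 else 0) + if e = f then 2 else 0
  have hsum (D) : ∑ e ∈ D, l' e = ∑ e ∈ D, l e - #(D ∩ M.cut X) + if f ∈ D then 2 else 0 := by
    simp [l', sum_add_distrib, sum_sub_distrib]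
  refine ⟨X, f, hfX, l', fun D hD ↦ ?_, fun D hD ↦ ?_, ?_, fun e ↦ by simp only [l']; ring⟩
  · linarith [hsum D, hcut D hD]
  · rw [hsum]
    have hX : Even (#(D ∩ M.cut X) : ℤ) := (Int.even_coe_nat _).2 (hD.even_card_inter_cut X)
    exact ((heven D hD).sub hX).add (by split_ifs <;> decide)
  · have habs_f : (l' f).natAbs < (l f).natAbs := by
      simp only [l', if_pos hfX, if_true]
      lia
    refine sum_lt_sum (fun e _ ↦ ?_) ⟨f, mem_univ f, habs_f⟩
    obtain rfl | hef := eq_or_ne e f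
    · exact habs_f.le
    · have := hpos e
      simp only [l', if_neg hef]
      split_ifs <;> lia

lemma IsConservative.sum_mul_nonneg_of_even {c : E → ℤ} (hc : ∀ e, 0 ≤ c e)
    (hcut : ∀ X, ∀ f ∈ M.cut X, 2 * c f ≤ ∑ e ∈ M.cut X, c e) (hl : M.IsConservative l)
    (heven : ∀ D, M.IsEven D → Even (∑ e ∈ D, l e)) : 0 ≤ ∑ e, c e * l e := by
  classical
  induction hn : ∑ e, (l e).natAbs using Nat.strong_induction_on generalizing l with | h n ih
  by_cases! hnonneg : ∀ e, 0 ≤ l e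
  · exact sum_nonneg fun e _ ↦ mul_nonneg (hc e) (hnonneg e)
  obtain ⟨e₀, he₀⟩ := hnonneg
  obtain ⟨X, f, hfX, l', hl', heven', hlt, hll'⟩ := hl.exists_reduction heven he₀
  calc
    0 ≤ ∑ e, c e * l' e := ih _ (hn ▸ hlt) hl' heven' rfl
    _ ≤ ∑ e, c e * l' e + (∑ e ∈ M.cut X, c e - 2 * c f) := by linarith [hcut X f hfX]
    _ = ∑ e, c e * l e := by
      simp [hll', mul_add, mul_sub, sum_add_distrib, sum_sub_distrib, ← add_sub_assoc,
        mul_comm (2 : ℤ)]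

/-- If no cut is dominated by one of its edges, then `c` is a nonnegative combination of cycles
(Seymour's sums of circuits); this is the dual form of that statement. -/
lemma IsConservative.sum_mul_nonneg {c : E → ℤ} (hc : ∀ e, 0 ≤ c e)
    (hcut : ∀ X, ∀ f ∈ M.cut X, 2 * c f ≤ ∑ e ∈ M.cut X, c e) (hl : M.IsConservative l) :
    0 ≤ ∑ e, c e * l e := by
  have h : 0 ≤ ∑ e, c e * (2 * l e) := by
    refine IsConservative.sum_mul_nonneg_of_even hc hcut (fun D hD ↦ ?_) fun D _ ↦ ?_
    · simpa [← mul_sum] using hl D hD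
    · simp [← mul_sum]
  simpa [mul_left_comm _ (2 : ℤ), ← mul_sum] using h

end Reduction

section Bridgeless

variable [Fintype E]

/-- No edge is a bridge: every nonempty cut has at least two edges. -/
def IsBridgeless : Prop :=
  ∀ X, #(M.cut X) ≠ 1

variable {M} [DecidableEq V] [Finite V]

omit [DecidableEq V] [Finite V] in
lemma three_mul_sum_sub_two_mul_sum [DecidableEq E] (F : Finset E) (w : E → ℤ) :
    3 * ∑ e ∈ F, w e - 2 * ∑ e, w e = ∑ e, if e ∈ F then w e else -(2 * w e) :=
  calc
    _ = ∑ e, (3 * (if e ∈ F then w e else 0) - 2 * w e) := by simp [sum_sub_distrib, ← mul_sum]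
    _ = _ := sum_congr rfl fun e _ ↦ by split_ifs <;> ring

omit [Finite V] in
lemma IsBridgeless.two_mul_le_sum_cut [DecidableEq E] (hM : M.IsBridgeless) {F : Finset E}
    (hF : M.IsEven F) {X : Finset V} {f : E} (hf : f ∈ M.cut X) :
    2 * (if f ∈ F then 1 else 2 : ℤ) ≤ ∑ e ∈ M.cut X, if e ∈ F then 1 else 2 := by
  have hsum : ∑ e ∈ M.cut X, (if e ∈ F then 1 else 2 : ℤ) = 2 * #(M.cut X) - #(F ∩ M.cut X) :=
    calc
      _ = ∑ e ∈ M.cut X, (2 - if e ∈ F then 1 else 0 : ℤ) :=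
        sum_congr rfl fun e _ ↦ by split_ifs <;> rfl
      _ = _ := by simp [sum_sub_distrib, inter_comm, mul_comm]
  have hone := hM X
  have hpos := card_pos.2 ⟨f, hf⟩
  have hsub : F ∩ M.cut X ⊆ M.cut X := inter_subset_right
  obtain ⟨k, hk⟩ := hF.even_card_inter_cut X
  rw [hsum]
  by_cases hfF : f ∈ F
  · have := card_le_card hsub
    rw [if_pos hfF]
    lia
  · have := card_lt_card (hsub.ssubset_of_ne fun h ↦ hfF (mem_inter.1 (h ▸ hf)).1)
    rw [if_neg hfF]
    lia

lemma IsBridgeless.exists_isEven_two_mul_sum_le (hM : M.IsBridgeless) (w : E → ℤ) :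
    ∃ F, M.IsEven F ∧ 2 * ∑ e, w e ≤ 3 * ∑ e ∈ F, w e := by
  classical
  obtain ⟨F, hF, hmax⟩ := Set.exists_max_image {F | M.IsEven F} (fun F ↦ ∑ e ∈ F, w e)
    (Set.toFinite _) ⟨∅, M.boundary_empty⟩
  have hcons : M.IsConservative (fun e ↦ -reverseOn F w e) := fun D hD ↦ by
    have hle := hmax _ (hF.symmDiff hD)
    rw [sum_symmDiff] at hle
    rw [sum_neg_distrib]
    linarith
  have hnonneg := hcons.sum_mul_nonneg (c := fun e ↦ if e ∈ F then 1 else 2)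
    (fun e ↦ by split_ifs <;> decide) fun X f hf ↦ hM.two_mul_le_sum_cut hF hf
  have hsum : ∑ e, (if e ∈ F then 1 else 2) * -reverseOn F w e =
      3 * ∑ e ∈ F, w e - 2 * ∑ e, w e := by
    rw [three_mul_sum_sub_two_mul_sum]
    exact sum_congr rfl fun e _ ↦ by rw [reverseOn]; split_ifs <;> ring
  exact ⟨F, hF, by linarith⟩

/-- A large bonus on the edges at `U` forces the even edge set to be as large as possible there. -/
lemma IsBridgeless.exists_isEven_card_inter_cut_eq_two [DecidableEq E] (hM : M.IsBridgeless)
    (w : E → ℤ) {U : Finset V} (hU : ∀ p ∈ U, #(M.cut {p}) = 3) :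
    ∃ F, M.IsEven F ∧ (∀ p ∈ U, #(F ∩ M.cut {p}) = 2) ∧ 2 * ∑ e, w e ≤ 3 * ∑ e ∈ F, w e := by
  set K : ℤ := 1 + ∑ e, |w e|
  obtain ⟨F, hF, hle⟩ := hM.exists_isEven_two_mul_sum_le
    fun e ↦ w e + K * ∑ p ∈ U, if e ∈ M.cut {p} then 1 else 0
  have hbonus (D : Finset E) : ∑ e ∈ D, (w e + K * ∑ p ∈ U, if e ∈ M.cut {p} then 1 else 0) =
      ∑ e ∈ D, w e + K * ∑ p ∈ U, (#(D ∩ M.cut {p}) : ℤ) := by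
    rw [sum_add_distrib, ← mul_sum, sum_comm]
    simp
  have htwo : ∀ p ∈ U, (#(F ∩ M.cut {p}) : ℤ) ≤ 2 := fun p hp ↦ by
    obtain ⟨k, hk⟩ := hF.even_card_inter_cut {p}
    have hthree := card_le_card (inter_subset_right : F ∩ M.cut {p} ⊆ M.cut {p})
    rw [hU p hp] at hthree
    lia
  have hfull : ∑ p ∈ U, (#(univ ∩ M.cut {p}) : ℤ) = 3 * #U := by
    rw [sum_congr rfl fun p hp ↦ by rw [univ_inter, hU p hp]]
    simp [mul_comm]
  have hgap : 3 * ∑ e ∈ F, w e - 2 * ∑ e, w e ≤ 2 * ∑ e, |w e| := by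
    rw [three_mul_sum_sub_two_mul_sum, mul_sum]
    refine sum_le_sum fun e _ ↦ ?_
    split_ifs <;> linarith [le_abs_self (w e), neg_abs_le (w e)]
  have hKpos : 0 < K := by positivity
  rw [hbonus, hbonus, hfull] at hle
  have hsum : 2 * #U ≤ ∑ p ∈ U, (#(F ∩ M.cut {p}) : ℤ) := by
    by_contra! hlt
    have hKlt := mul_le_mul_of_nonneg_left (Int.le_sub_one_of_lt hlt) hKpos.le
    linarith
  have heq : ∑ p ∈ U, (#(F ∩ M.cut {p}) : ℤ) = ∑ p ∈ U, 2 :=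
    le_antisymm (sum_le_sum htwo) (by simpa [mul_comm] using hsum)
  refine ⟨F, hF, fun p hp ↦ mod_cast (sum_eq_sum_iff_of_le htwo).1 heq p hp, ?_⟩
  rw [heq, sum_const, nsmul_eq_mul] at hle
  linarith

end Bridgeless

end Multigraph

section Euler

open Finset

lemma sum_count_eq_countP {α : Type*} [DecidableEq α] (l : List α) (s : Finset α) :
    ∑ a ∈ s, l.count a = l.countP (· ∈ s) := by
  induction l with
  | nil => simp
  | cons b l ih => simp [List.count_cons, List.countP_cons, sum_add_distrib, ih]

variable {V : Type*} {G : SimpleGraph V} {u v x : V} [DecidableEq V]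

lemma even_countP_mem_edges_iff (p : G.Walk u v) (x : V) :
    Even (p.edges.countP (x ∈ ·)) ↔ (u ≠ v → x ≠ u ∧ x ≠ v) := by
  induction p with
  | nil => simp
  | cons huv p ih =>
    have := huv.ne
    simp only [Walk.edges_cons, List.countP_cons, Sym2.mem_iff, decide_eq_true_eq]
    split_ifs <;> grind

lemma sum_filter_mem_count_edges [Fintype G.edgeSet] (p : G.Walk u v) (x : V) :
    ∑ e ∈ G.edgeFinset with x ∈ e, p.edges.count e = p.edges.countP (x ∈ ·) := by
  rw [sum_count_eq_countP]
  refine List.countP_congr fun e he ↦ ?_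
  simp [p.edges_subset_edgeSet he]

lemma sum_edgeFinset_count_edges [Fintype G.edgeSet] (p : G.Walk u v) :
    ∑ e ∈ G.edgeFinset, p.edges.count e = p.length := by
  rw [sum_count_eq_countP, ← p.length_edges, List.countP_eq_length]
  exact fun e he ↦ by simpa using p.edges_subset_edgeSet he

lemma length_le_sum_of_count_edges_le [Fintype G.edgeSet] {m : Sym2 V → ℕ} {p : G.Walk u v}
    (hp : ∀ e, p.edges.count e ≤ m e) : p.length ≤ ∑ e ∈ G.edgeFinset, m e :=
  sum_edgeFinset_count_edges p ▸ sum_le_sum fun e _ ↦ hp e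

lemma count_edges_concat_le {m : Sym2 V → ℕ} {p : G.Walk u v} (hp : ∀ e, p.edges.count e ≤ m e)
    (h : G.Adj v x) (hlt : p.edges.count s(v, x) < m s(v, x)) (e : Sym2 V) :
    (p.concat h).edges.count e ≤ m e := by
  rw [Walk.edges_concat, List.concat_eq_append, List.count_append, List.count_singleton]
  obtain rfl | he := eq_or_ne e s(v, x)
  · simpa using hlt
  · simpa [he.symm] using hp e

variable (G) in
lemma exists_longest_walk_count_edges_le [Nonempty V] [Finite G.edgeSet] (m : Sym2 V → ℕ) :
    ∃ (u v : V) (p : G.Walk u v), (∀ e, p.edges.count e ≤ m e) ∧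
      ∀ (x y : V) (q : G.Walk x y), (∀ e, q.edges.count e ≤ m e) → q.length ≤ p.length := by
  cases nonempty_fintype G.edgeSet
  let lengths : Set ℕ :=
    {n | ∃ (u v : V) (p : G.Walk u v), (∀ e, p.edges.count e ≤ m e) ∧ p.length = n}
  have hbdd : BddAbove lengths := ⟨∑ e ∈ G.edgeFinset, m e, by
    rintro _ ⟨u, v, p, hp, rfl⟩
    exact length_le_sum_of_count_edges_le hp⟩
  have hne : lengths.Nonempty :=
    ⟨0, Classical.arbitrary V, Classical.arbitrary V, Walk.nil, by simp, rfl⟩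
  obtain ⟨u, v, p, hp, hmax⟩ := Nat.sSup_mem hne hbdd
  exact ⟨u, v, p, hp, fun x y q hq ↦ hmax ▸ le_csSup hbdd ⟨x, y, q, hq, rfl⟩⟩

/-- A longest walk using each edge `e` at most `m e` times is closed by parity, and after a
rotation it can be prolonged by any edge that leaves its support. -/
lemma exists_spanning_closed_walk_count_edges_le [Fintype G.edgeSet] {m : Sym2 V → ℕ}
    (heven : ∀ x, Even (∑ e ∈ G.edgeFinset with x ∈ e, m e))
    (hconn : (G.deleteEdges {e | m e = 0}).Connected) :
    ∃ (v : V) (p : G.Walk v v), (∀ x, x ∈ p.support) ∧ ∀ e, p.edges.count e ≤ m e := by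
  have := hconn.nonempty
  obtain ⟨u, v, p, hp, hmax⟩ := exists_longest_walk_count_edges_le G m
  have hsat {a b c : V} (q : G.Walk a b) (hq : ∀ e, q.edges.count e ≤ m e)
      (hlen : q.length = p.length) (h : G.Adj b c) : q.edges.count s(b, c) = m s(b, c) := by
    by_contra hne
    have := hmax _ _ _ (count_edges_concat_le hq h ((hq _).lt_of_ne hne))
    simp [hlen] at this
  obtain rfl : u = v := by
    by_contra huv
    have hcount : ∑ e ∈ G.edgeFinset with v ∈ e, p.edges.count e =
        ∑ e ∈ G.edgeFinset with v ∈ e, m e := sum_congr rfl fun e he ↦ by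
      obtain ⟨heG, hve⟩ := mem_filter.1 he
      obtain ⟨x, rfl⟩ := Sym2.mem_iff_exists.1 hve
      exact hsat p hp rfl (mem_edgeFinset.1 heG)
    have hv := heven v
    rw [← hcount, sum_filter_mem_count_edges, even_countP_mem_edges_iff] at hv
    exact (hv huv).2 rfl
  refine ⟨u, p, ?_, hp⟩
  by_contra! ⟨y, hy⟩
  obtain ⟨q⟩ := hconn.preconnected u y
  obtain ⟨d, -, hx, hy⟩ := q.exists_boundary_dart {x | x ∈ p.support} p.start_mem_support hy
  have hrot := p.rotate_edges d.fst hx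
  obtain ⟨hadj, hpos⟩ := (deleteEdges_adj ..).1 d.adj
  have hfull := hsat (p.rotate d.fst hx) (fun e ↦ hrot.perm.count_eq e ▸ hp e)
    (p.length_rotate d.fst hx) hadj
  have hmem : s(d.fst, d.snd) ∈ p.edges :=
    hrot.mem_iff.1 (List.count_pos_iff.1 (hfull ▸ Nat.pos_of_ne_zero hpos))
  exact hy (p.snd_mem_support_of_mem_edges hmem)

/-- Traverse `F` once, the rest of `R` never, and every other edge twice. -/
lemma exists_spanning_closed_walk_length_le [Fintype G.edgeSet] {F R : Finset (Sym2 V)}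
    (hFG : F ⊆ G.edgeFinset) (hF : ∀ x, Even #{e ∈ F | x ∈ e})
    (hconn : (G.deleteEdges (R \ F : Finset (Sym2 V))).Connected) :
    ∃ (v : V) (p : G.Walk v v), (∀ x, x ∈ p.support) ∧
      p.length ≤ #F + 2 * #(G.edgeFinset \ (F ∪ R)) := by
  let m (e : Sym2 V) : ℕ := (if e ∈ F then 1 else 0) + 2 * if e ∈ F ∪ R then 0 else 1
  have hsum (s : Finset (Sym2 V)) : ∑ e ∈ s, m e = #(s ∩ F) + 2 * #(s \ (F ∪ R)) := by
    simp [m, sum_add_distrib, sum_ite, sdiff_eq_filter, mul_comm]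
  obtain ⟨v, p, hp, hm⟩ := exists_spanning_closed_walk_count_edges_le (G := G) (m := m)
    (fun x ↦ by
      rw [hsum, filter_inter, inter_eq_right.2 hFG]
      exact (hF x).add (even_two_mul _)) (by
      convert hconn using 3
      ext e
      by_cases e ∈ F <;> simp_all [m])
  refine ⟨v, p, hp, (length_le_sum_of_count_edges_le hm).trans_eq ?_⟩
  rw [hsum, inter_eq_right.2 hFG]

end Euler

section Splitting

open Finset

section Connectivity

variable {V : Type*} {G : SimpleGraph V} {S T : Set V} {u v x y : V}

lemma mem_iff_mem_of_preconnected_induce (hT : (G.induce T).Preconnected)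
    (hS : ∀ a ∈ T, ∀ b ∈ T, G.Adj a b → (a ∈ S ↔ b ∈ S)) (hx : x ∈ T) (hy : y ∈ T) :
    x ∈ S ↔ y ∈ S := by
  suffices h : ∀ a b : T, (G.induce T).Walk a b → ((a : V) ∈ S ↔ (b : V) ∈ S) from
    (hT ⟨x, hx⟩ ⟨y, hy⟩).elim (h _ _)
  intro a b hab
  induction hab with
  | nil => rfl
  | cons h _ ih => exact (hS _ (Subtype.prop _) _ (Subtype.prop _) h).trans ih

/-- A 2-vertex-connected graph on at least three vertices has no bridge. -/
lemma mem_iff_mem_of_forall_adj_ne (hcard : 3 ≤ ENat.card V)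
    (h2vc : ∀ v, (G.induce {u | u ≠ v}).Preconnected)
    (hS : ∀ a b, G.Adj a b → s(a, b) ≠ s(u, v) → (a ∈ S ↔ b ∈ S)) : u ∈ S ↔ v ∈ S := by
  obtain rfl | huv := eq_or_ne u v
  · rfl
  obtain ⟨z, hzu, hzv⟩ := ENat.exists_ne_ne_of_three_le hcard u v
  have huz : u ∈ S ↔ z ∈ S :=
    mem_iff_mem_of_preconnected_induce (h2vc v)
      (fun a ha b hb hab ↦ hS a b hab fun h ↦ by simp_all) huv hzv
  have hzv : z ∈ S ↔ v ∈ S :=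
    mem_iff_mem_of_preconnected_induce (h2vc u)
      (fun a ha b hb hab ↦ hS a b hab fun h ↦ by simp_all) hzu huv.symm
  exact huz.trans hzv

lemma exists_adj_notMem_of_card_lt_degree {s : Finset (Sym2 V)} {v : V}
    [Fintype (G.neighborSet v)] (h : #s < G.degree v) : ∃ x, G.Adj v x ∧ s(v, x) ∉ s := by
  classical
  rw [← G.card_incidenceFinset_eq_degree] at h
  obtain ⟨e, he, hes⟩ := exists_mem_notMem_of_card_lt_card h
  obtain ⟨heG, hve⟩ := (G.mem_incidenceFinset v e).1 he
  obtain ⟨x, rfl⟩ := Sym2.mem_iff_exists.1 hve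
  exact ⟨x, heG, hes⟩

end Connectivity

variable {V ι : Type*} (G : SimpleGraph V) (pair : ι → Finset (Sym2 V)) (center : ι → V)

open Classical in
/-- The end at `x` of the edge `e` after splitting: the edges of `pair i` are moved from their
common end `center i` to the new vertex `inr i`. -/
noncomputable def splitEnd (e : Sym2 V) (x : V) : V ⊕ ι :=
  if h : ∃ i, e ∈ pair i ∧ center i = x then Sum.inr h.choose else Sum.inl x

/-- The multigraph obtained from `G` by splitting off, for every `i`, a new vertex `inr i` from
`center i`: it takes over the edges of `pair i` and is joined to `center i` by the new edge
`inr i`. -/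
noncomputable def splitMultigraph : Multigraph (V ⊕ ι) (G.edgeSet ⊕ ι) where
  ends := Sum.elim (fun e ↦ (e : Sym2 V).map (splitEnd pair center e))
    fun i ↦ s(Sum.inl (center i), Sum.inr i)

variable {G pair center} {e : Sym2 V} {x y : V} {i : ι} {X : Finset (V ⊕ ι)}

lemma sumElim_splitEnd : Sum.elim id center (splitEnd pair center e x) = x := by
  unfold splitEnd
  split_ifs with h
  · exact h.choose_spec.2
  · rfl

lemma splitEnd_eq_inr_iff (hdisj : Pairwise (Function.onFun Disjoint pair)) :
    splitEnd pair center e x = Sum.inr i ↔ e ∈ pair i ∧ center i = x := by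
  unfold splitEnd
  split_ifs with h
  · refine Sum.inr_injective.eq_iff.trans ⟨fun hi ↦ hi ▸ h.choose_spec, fun hi ↦ ?_⟩
    by_contra hne
    exact disjoint_left.1 (hdisj hne) h.choose_spec.1 hi.1
  · simpa using fun he hi ↦ h ⟨i, he, hi⟩

variable [Fintype G.edgeSet] [Fintype ι]

lemma inl_mem_cut_splitMultigraph (h : G.Adj x y) :
    Sum.inl ⟨s(x, y), h⟩ ∈ (splitMultigraph G pair center).cut X ↔
      ¬(splitEnd pair center s(x, y) x ∈ X ↔ splitEnd pair center s(x, y) y ∈ X) :=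
  Multigraph.mem_cut_iff_of_ends rfl

lemma inr_mem_cut_splitMultigraph :
    Sum.inr i ∈ (splitMultigraph G pair center).cut X ↔
      ¬(Sum.inl (center i) ∈ X ↔ Sum.inr i ∈ X) :=
  Multigraph.mem_cut_iff_of_ends rfl

lemma splitEnd_mem_iff
    (h : ∀ i, e ∈ pair i → center i = x → Sum.inr i ∉ (splitMultigraph G pair center).cut X) :
    splitEnd pair center e x ∈ X ↔ Sum.inl x ∈ X := by
  unfold splitEnd
  split_ifs with hi
  · obtain ⟨he, hx⟩ := hi.choose_spec
    have hcut := h _ he hx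
    rw [inr_mem_cut_splitMultigraph, not_not, hx] at hcut
    exact hcut.symm
  · rfl

lemma cut_splitMultigraph_ne_singleton_inl (hcard : 3 ≤ ENat.card V)
    (h2vc : ∀ v, (G.induce {u | u ≠ v}).Preconnected) (f : G.edgeSet) :
    (splitMultigraph G pair center).cut X ≠ {Sum.inl f} := fun hX ↦ by
  have hold (a b : V) (hab : G.Adj a b) :
      s(a, b) = f ↔ ¬((Sum.inl a : V ⊕ ι) ∈ X ↔ (Sum.inl b : V ⊕ ι) ∈ X) := by
    have hmem := inl_mem_cut_splitMultigraph (pair := pair) (center := center) (X := X) hab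
    rw [hX, splitEnd_mem_iff (G := G) (by simp [hX]), splitEnd_mem_iff (G := G) (by simp [hX])]
      at hmem
    simpa [Subtype.ext_iff] using hmem
  obtain ⟨f, hf⟩ := f
  induction f with | h u v
  exact (hold u v hf).1 rfl <| mem_iff_mem_of_forall_adj_ne (S := {a | Sum.inl a ∈ X}) hcard h2vc
    fun a b hab hne ↦ not_not.1 fun h ↦ hne ((hold a b hab).2 h)

lemma cut_splitMultigraph_ne_singleton_inr [G.LocallyFinite]
    (h2vc : ∀ v, (G.induce {u | u ≠ v}).Preconnected)
    (hdisj : Pairwise (Function.onFun Disjoint pair)) (hsub : ∀ e ∈ pair i, e ∈ G.edgeSet)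
    (hcenter : ∀ e ∈ pair i, center i ∈ e) (hne : (pair i).Nonempty)
    (hdeg : #(pair i) < G.degree (center i)) :
    (splitMultigraph G pair center).cut X ≠ {Sum.inr i} := fun hX ↦ by
  classical
  have hend {e : Sym2 V} {x : V} (h : x ≠ center i ∨ e ∉ pair i) :
      splitEnd pair center e x ∈ X ↔ Sum.inl x ∈ X := by
    refine splitEnd_mem_iff (G := G) fun j he hj ↦ ?_
    rw [hX, mem_singleton, Sum.inr_injective.eq_iff]
    grind
  have hadj (a b : V) (hab : G.Adj a b) :
      splitEnd pair center s(a, b) a ∈ X ↔ splitEnd pair center s(a, b) b ∈ X := by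
    rw [← not_not (a := _ ↔ _), ← inl_mem_cut_splitMultigraph hab]
    simp [hX]
  have hoff : ∀ a ≠ center i, ∀ b ≠ center i, (Sum.inl a : V ⊕ ι) ∈ X ↔ (Sum.inl b : V ⊕ ι) ∈ X :=
    fun a ha b hb ↦ mem_iff_mem_of_preconnected_induce (S := {a | Sum.inl a ∈ X}) (h2vc (center i))
      (fun a ha b hb hab ↦ by simpa [hend (.inl ha), hend (.inl hb)] using hadj a b hab) ha hb
  obtain ⟨x, hx, hxi⟩ := exists_adj_notMem_of_card_lt_degree hdeg
  obtain ⟨e, he⟩ := hne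
  obtain ⟨y, rfl⟩ := Sym2.mem_iff_exists.1 (hcenter e he)
  have hy : G.Adj (center i) y := hsub _ he
  have hold : Sum.inl (center i) ∈ X ↔ Sum.inl x ∈ X :=
    (hend (.inr hxi)).symm.trans <| (hadj _ _ hx).trans <| hend (.inl hx.ne')
  have hnew : Sum.inr i ∈ X ↔ Sum.inl y ∈ X := by
    rw [← hend (.inl hy.ne'), ← hadj _ _ hy, (splitEnd_eq_inr_iff hdisj).2 ⟨he, rfl⟩]
  have hcut : Sum.inr i ∈ (splitMultigraph G pair center).cut X := hX ▸ mem_singleton_self _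
  exact inr_mem_cut_splitMultigraph.1 hcut <|
    hold.trans <| (hoff x hx.ne' y hy.ne').trans hnew.symm

lemma isBridgeless_splitMultigraph [G.LocallyFinite] (hcard : 3 ≤ ENat.card V)
    (h2vc : ∀ v, (G.induce {u | u ≠ v}).Preconnected)
    (hdisj : Pairwise (Function.onFun Disjoint pair)) (hsub : ∀ i, ∀ e ∈ pair i, e ∈ G.edgeSet)
    (hcenter : ∀ i, ∀ e ∈ pair i, center i ∈ e) (hne : ∀ i, (pair i).Nonempty)
    (hdeg : ∀ i, #(pair i) < G.degree (center i)) :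
    (splitMultigraph G pair center).IsBridgeless := fun X hX ↦ by
  obtain ⟨f | i, hf⟩ := card_eq_one.1 hX
  · exact cut_splitMultigraph_ne_singleton_inl hcard h2vc f hf
  · exact cut_splitMultigraph_ne_singleton_inr h2vc hdisj (hsub i) (hcenter i) (hne i) (hdeg i) hf

omit [Fintype ι] [Fintype G.edgeSet] in
/-- The edges of `G` that belong to an edge set `J` of the split multigraph. -/
def originalEdges (J : Finset (G.edgeSet ⊕ ι)) : Finset (Sym2 V) :=
  J.toLeft.map (Function.Embedding.subtype _)

omit [Fintype ι] in
lemma originalEdges_subset (J : Finset (G.edgeSet ⊕ ι)) : originalEdges J ⊆ G.edgeFinset := by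
  intro e he
  obtain ⟨f, -, rfl⟩ := mem_map.1 he
  exact mem_edgeFinset.2 f.2

lemma originalEdges_univ : originalEdges (univ : Finset (G.edgeSet ⊕ ι)) = G.edgeFinset := by
  ext
  simp [originalEdges]

omit [Fintype ι] [Fintype G.edgeSet] in
lemma sum_originalEdges (J : Finset (G.edgeSet ⊕ ι)) (w : Sym2 V → ℤ) :
    ∑ e ∈ originalEdges J, w e = ∑ e ∈ J, Sum.elim (fun f : G.edgeSet ↦ w f) (fun _ ↦ 0) e := by
  simp [originalEdges, sum_sum_eq_sum_toLeft_add_sum_toRight]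

omit [Fintype ι] in
lemma card_inter_disjSum [DecidableEq V] [DecidableEq ι] (J : Finset (G.edgeSet ⊕ ι))
    (p : Sym2 V → Prop) [DecidablePred p] (t : Finset ι) :
    #(J ∩ disjSum {e : G.edgeSet | p e} t) = #{e ∈ originalEdges J | p e} + #(J.toRight ∩ t) := by
  rw [← card_toLeft_add_card_toRight, toLeft_inter, toRight_inter, toLeft_disjSum, toRight_disjSum,
    originalEdges, filter_map, card_map, inter_filter, inter_univ]
  rfl

lemma cut_fibre [DecidableEq V] [Fintype V] (v : V) :
    (splitMultigraph G pair center).cut {z | Sum.elim id center z = v} =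
      disjSum {e : G.edgeSet | v ∈ (e : Sym2 V)} ∅ := by
  ext (⟨e, he⟩ | i)
  · induction e with | h x y
    have := G.ne_of_adj he
    simp only [inl_mem_cut_splitMultigraph he, mem_filter_univ, sumElim_splitEnd,
      inl_mem_disjSum, Sym2.mem_iff]
    grind
  · rw [inr_mem_cut_splitMultigraph]
    simp

lemma cut_singleton_inr [DecidableEq V] (hdisj : Pairwise (Function.onFun Disjoint pair))
    (hcenter : ∀ e ∈ pair i, center i ∈ e) :
    (splitMultigraph G pair center).cut {Sum.inr i} =
      disjSum {e : G.edgeSet | (e : Sym2 V) ∈ pair i} {i} := by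
  ext (⟨e, he⟩ | i)
  · induction e with | h x y
    have := G.ne_of_adj he
    have := fun h ↦ Sym2.mem_iff.1 (hcenter s(x, y) h)
    simp only [inl_mem_cut_splitMultigraph he, mem_singleton, splitEnd_eq_inr_iff hdisj,
      inl_mem_disjSum, mem_filter_univ]
    grind
  · rw [inr_mem_cut_splitMultigraph]
    simp

omit [Fintype ι] in
lemma exists_even_subset_edgeFinset [Finite ι] [Finite V] [DecidableEq V] [G.LocallyFinite]
    (hcard : 3 ≤ ENat.card V) (h2vc : ∀ v, (G.induce {u | u ≠ v}).Preconnected)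
    (hdisj : Pairwise (Function.onFun Disjoint pair)) (hsub : ∀ i, pair i ⊆ G.edgeFinset)
    (hcenter : ∀ i, ∀ e ∈ pair i, center i ∈ e) (hpair : ∀ i, #(pair i) = 2)
    (hdeg : ∀ i, 3 ≤ G.degree (center i)) (w : Sym2 V → ℤ) :
    ∃ F ⊆ G.edgeFinset, (∀ x, Even #{e ∈ F | x ∈ e}) ∧ (∀ i, #(pair i \ F) ≤ 1) ∧
      2 * ∑ e ∈ G.edgeFinset, w e ≤ 3 * ∑ e ∈ F, w e := by
  classical
  cases nonempty_fintype V
  cases nonempty_fintype ι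
  have hbridge : (splitMultigraph G pair center).IsBridgeless :=
    isBridgeless_splitMultigraph hcard h2vc hdisj (fun i e he ↦ mem_edgeFinset.1 (hsub i he))
      hcenter (fun i ↦ card_pos.1 (by simp [hpair])) fun i ↦ (hpair i).trans_lt (hdeg i)
  have hcut (J : Finset (G.edgeSet ⊕ ι)) (i : ι) :
      #(J ∩ (splitMultigraph G pair center).cut {Sum.inr i}) =
        #(originalEdges J ∩ pair i) + #(J.toRight ∩ {i}) := by
    rw [cut_singleton_inr hdisj (hcenter i), card_inter_disjSum _ (· ∈ pair i),
      filter_mem_eq_inter]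
  have hthree (i : ι) : #((splitMultigraph G pair center).cut {Sum.inr i}) = 3 := by
    rw [← univ_inter ((splitMultigraph G pair center).cut _), hcut, originalEdges_univ,
      inter_eq_right.2 (hsub i), hpair]
    simp
  obtain ⟨J, hJ, hJcut, hJw⟩ := hbridge.exists_isEven_card_inter_cut_eq_two
    (Sum.elim (fun e ↦ w e) fun _ ↦ 0) (U := univ.map .inr) (by simpa using hthree)
  refine ⟨originalEdges J, originalEdges_subset J, fun x ↦ ?_, fun i ↦ ?_, ?_⟩
  · have heven := hJ.even_card_inter_cut {z | Sum.elim id center z = x}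
    rwa [cut_fibre, card_inter_disjSum _ (x ∈ ·), inter_empty, card_empty, add_zero] at heven
  · have htwo := hJcut (Sum.inr i) (by simp)
    have hnew := card_le_card (inter_subset_right : J.toRight ∩ {i} ⊆ {i})
    have hsplit := card_sdiff_add_card_inter (pair i) (originalEdges J)
    rw [hcut] at htwo
    rw [hpair, inter_comm] at hsplit
    rw [card_singleton] at hnew
    lia
  · rwa [← sum_originalEdges, ← sum_originalEdges, originalEdges_univ] at hJw

end Splitting

section Counting

open Finset

variable {α : Type*} [DecidableEq α] {E F R : Finset α}

lemma sum_ite_mem_neg_one_one (s t : Finset α) :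
    ∑ e ∈ s, (if e ∈ t then -1 else 1 : ℤ) = #s - 2 * #(s ∩ t) := by
  rw [sum_ite, filter_mem_eq_inter, filter_notMem_eq_sdiff]
  have := card_sdiff_add_card_inter s t
  simp only [sum_const, nsmul_eq_mul]
  lia

lemma card_add_two_mul_card_sdiff_le (hF : F ⊆ E) (hR : R ⊆ E)
    (hw : 2 * ∑ e ∈ E, (if e ∈ R then -1 else 1 : ℤ) ≤ 3 * ∑ e ∈ F, if e ∈ R then -1 else 1) :
    3 * (#F + 2 * #(E \ (F ∪ R))) + 2 * #R ≤ 4 * #E := by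
  rw [sum_ite_mem_neg_one_one, sum_ite_mem_neg_one_one, inter_eq_right.2 hR] at hw
  have hunion := card_union_add_card_inter F R
  have hsdiff := card_sdiff_add_card_eq_card (union_subset hF hR)
  lia

end Counting

/-- A 2-vertex-connected simple graph on at least 3 vertices with a
removable pairing `(R, P)` has a spanning closed walk of length at most
`(4/3)·|E| − (2/3)·|R|`. -/
theorem spanning_closed_walk_of_removable_pairing
    {V : Type*} [Fintype V] [DecidableEq V]
    (G : SimpleGraph V) [DecidableRel G.Adj]
    (hcard : 3 ≤ Fintype.card V)
    (hconn : G.Connected)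
    (h2vc : ∀ v : V, (G.induce {u : V | u ≠ v}).Connected)
    (R : Finset (Sym2 V)) (P : Finset (Finset (Sym2 V)))
    (hR : R ⊆ G.edgeFinset)
    (hPpair : ∀ p ∈ P, p.card = 2)
    (hPsub : ∀ p ∈ P, p ⊆ R)
    (hPdisj : ∀ p ∈ P, ∀ q ∈ P, p ≠ q → Disjoint p q)
    (hPdeg : ∀ p ∈ P, ∃ v : V, (∀ e ∈ p, v ∈ e) ∧ 3 ≤ G.degree v)
    (hPdel : ∀ D : Finset (Sym2 V), D ⊆ R → (∀ p ∈ P, (D ∩ p).card ≤ 1) →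
      (G.deleteEdges (D : Set (Sym2 V))).Connected) :
    ∃ (v : V) (w : G.Walk v v), (∀ u : V, u ∈ w.support) ∧
      (w.length : ℝ) ≤ 4 / 3 * G.edgeFinset.card - 2 / 3 * R.card := by
  choose center hcenter hdeg using fun p : P ↦ hPdeg p p.2
  obtain ⟨F, hFG, hFeven, hFpair, hFweight⟩ :=
    exists_even_subset_edgeFinset (pair := fun p : P ↦ p.1) (by simpa using hcard)
      (fun v ↦ (h2vc v).preconnected)
      (fun p q hpq ↦ hPdisj p p.2 q q.2 (Subtype.coe_ne_coe.2 hpq))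
      (fun p ↦ (hPsub p p.2).trans hR) hcenter (fun p ↦ hPpair p p.2) hdeg
      fun e ↦ if e ∈ R then -1 else 1
  have hdel : (G.deleteEdges (R \ F : Finset (Sym2 V))).Connected :=
    hPdel _ Finset.sdiff_subset fun p hp ↦ (Finset.card_le_card <| by grind).trans (hFpair ⟨p, hp⟩)
  obtain ⟨v, walk, hwalk, hlength⟩ := exists_spanning_closed_walk_length_le hFG hFeven hdel
  refine ⟨v, walk, hwalk, ?_⟩
  have hbound : 3 * walk.length + 2 * R.card ≤ 4 * G.edgeFinset.card := by
    have := card_add_two_mul_card_sdiff_le hFG hR hFweight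
    lia
  have : (3 * walk.length + 2 * R.card : ℝ) ≤ 4 * G.edgeFinset.card := mod_cast hbound
  linarith
end

section
/- Let G = (V,E) be a cubic 2-edge-connected simple graph. Then there exist finitely many perfect matchings M_1, …, M_k of G and nonnegative reals p_1, …, p_k summing to 1 such that for every edge e ∈ E, the sum of p_i over all i with e ∈ M_i equals exactly 1/3. -/
open SimpleGraph

/-!
A matching is encoded as an involution whose fixed points are the uncovered vertices. Superposing
two matchings of maximum weight and exchanging them along an alternating path gives two further
matchings of maximum weight, so an uncovered vertex can be moved. It follows (Lovász) that if no
vertex is covered by all maximum weight matchings, then each maximum weight matching misses at most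
one vertex of every component of the graph of edges of positive weight, and these components are
odd. Hence every nonzero weight has a tight set: a vertex whose degree constraint, or an odd
component whose odd set inequality, is attained with equality by all its maximum weight matchings.

Suppose a fractional matching `x` satisfying the odd set inequalities outweighs all matchings by at
least `δ > 0` for some weight. Lowering that weight slightly on the edges that meet a tight set
keeps the gap, so no such weight is minimal, contradicting compactness. By Hahn–Banach separation
`x` is a convex combination of matchings. In an `r`-regular graph all of whose odd cuts have at
least `r` edges this applies to `1 / r` times the adjacency matrix. In a bridgeless cubic graph odd
cuts have an odd number of edges, which is not `1`.
-/

open Finset Function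

section Involutions

variable {α : Type*}

lemma even_card_of_involution_without_fixedPoints {s : Finset α} {f : α → α}
    (hmaps : ∀ a ∈ s, f a ∈ s) (hinv : ∀ a ∈ s, f (f a) = a) (hfix : ∀ a ∈ s, f a ≠ a) :
    Even #s := by
  have hsum : ∑ _a ∈ s, (1 : ZMod 2) = 0 :=
    sum_involution (fun a _ => f a) (fun _ _ => by decide) (fun a ha _ => hfix a ha) hmaps hinv
  rw [← ZMod.natCast_eq_zero_iff_even]
  simpa using hsum

lemma involutive_piecewise {f g : α → α} (hf : Involutive f) (hg : Involutive g) {K : Set α}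
    [∀ a, Decidable (a ∈ K)] (hfK : Set.MapsTo f K K) (hgK : Set.MapsTo g K K) :
    Involutive (K.piecewise f g) := by
  intro a
  by_cases ha : a ∈ K
  · simp [ha, hfK ha, hf a]
  · have hga : g a ∉ K := fun h => ha (hg a ▸ hgK h)
    simp [ha, hga, hg a]

section AlternatingPath

variable {f g : α → α} (hf : Involutive f) (hg : Involutive g)

/-- The composition `f ∘ g` of two involutions, as a permutation: two steps along an alternating
path of `f` and `g`. -/
def alternatingStep : Equiv.Perm α := hf.toPerm * hg.toPerm

/-- The alternating path of the involutions `f` and `g` through `t`, encoded as the orbit of `t`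
under `f ∘ g`. When `g t = t`, this orbit is the vertex set of the path that starts at `t` and
follows `f` and `g` in turn. -/
def alternatingPath (t : α) : Set α :=
  {a | (alternatingStep hf hg).SameCycle t a}

lemma self_mem_alternatingPath (t : α) : t ∈ alternatingPath hf hg t :=
  Equiv.Perm.SameCycle.refl _ t

lemma semiconjBy_alternatingStep_inv :
    SemiconjBy hg.toPerm (alternatingStep hf hg) (alternatingStep hf hg)⁻¹ := by
  ext a
  simp [alternatingStep, Equiv.Perm.mul_apply]

lemma apply_alternatingStep_zpow_apply (i : ℤ) (a : α) :
    g ((alternatingStep hf hg ^ i) a) = (alternatingStep hf hg ^ (-i)) (g a) := by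
  have h := ((semiconjBy_alternatingStep_inv hf hg).zpow_right i).eq
  rw [inv_zpow'] at h
  exact DFunLike.congr_fun h a

variable {t : α} (ht : g t = t)
include ht

lemma mapsTo_right_alternatingPath :
    Set.MapsTo g (alternatingPath hf hg t) (alternatingPath hf hg t) := by
  rintro _ ⟨i, rfl⟩
  exact ⟨-i, by rw [apply_alternatingStep_zpow_apply hf hg, ht]⟩

lemma mapsTo_left_alternatingPath :
    Set.MapsTo f (alternatingPath hf hg t) (alternatingPath hf hg t) := by
  intro a ha
  have hfa : f a = alternatingStep hf hg (g a) := by simp [alternatingStep, hg a]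
  rw [hfa]
  exact (mapsTo_right_alternatingPath hf hg ht ha).apply_right

lemma alternatingStep_zpow_two_mul_sub_one_apply {i : ℤ}
    (hi : IsFixedPt f ((alternatingStep hf hg ^ i) t)) :
    (alternatingStep hf hg ^ (2 * i - 1)) t = t := by
  set ρ := alternatingStep hf hg
  have hturn : f ((ρ ^ i) t) = (ρ ^ (1 - i)) t := by
    rw [← hg ((ρ ^ i) t), apply_alternatingStep_zpow_apply hf hg, ht, sub_eq_add_neg,
      zpow_one_add]
    rfl
  calc (ρ ^ (2 * i - 1)) t = (ρ ^ (-(1 - i))) ((ρ ^ i) t) := by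
        rw [← Equiv.Perm.mul_apply, ← zpow_add]; ring_nf
    _ = (ρ ^ (-(1 - i))) ((ρ ^ (1 - i)) t) := by rw [← hturn, hi.eq]
    _ = t := by rw [← Equiv.Perm.mul_apply, ← zpow_add, neg_add_cancel, zpow_zero,
        Equiv.Perm.one_apply]

lemma eq_of_mem_alternatingPath_of_isFixedPt {u v : α}
    (hu : u ∈ alternatingPath hf hg t) (hv : v ∈ alternatingPath hf hg t)
    (hfu : IsFixedPt f u) (hfv : IsFixedPt f v) : u = v := by
  set ρ := alternatingStep hf hg
  obtain ⟨i, rfl⟩ := hu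
  obtain ⟨j, rfl⟩ := hv
  have hi : ρ ^ (2 * i - 1) ∈ MulAction.stabilizer (Equiv.Perm α) t :=
    alternatingStep_zpow_two_mul_sub_one_apply hf hg ht hfu
  have hj : ρ ^ (2 * j - 1) ∈ MulAction.stabilizer (Equiv.Perm α) t :=
    alternatingStep_zpow_two_mul_sub_one_apply hf hg ht hfv
  have hij : ρ ^ (i - j) ∈ MulAction.stabilizer (Equiv.Perm α) t := by
    have h := mul_mem (zpow_mem hi j) (zpow_mem hj (-i))
    rwa [← zpow_mul, ← zpow_mul, ← zpow_add,
      show (2 * i - 1) * j + (2 * j - 1) * -i = i - j by ring] at h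
  calc (ρ ^ i) t = (ρ ^ j) ((ρ ^ (i - j)) t) := by
        rw [← Equiv.Perm.mul_apply, ← zpow_add, add_sub_cancel]
    _ = (ρ ^ j) t := congrArg _ hij

end AlternatingPath

end Involutions

section MaximumWeight

variable {V : Type*}

/-- The matching obtained from the involution `f` by keeping only the pairs `{v, f v}` that are
related by `r`. -/
def keepPairs (r : V → V → Prop) [∀ u v, Decidable (r u v)] (f : V → V) : V → V :=
  {v | r v (f v)}.piecewise f id

section KeepPairs

variable {r : V → V → Prop} [∀ u v, Decidable (r u v)] {f : V → V}

lemma keepPairs_apply (v : V) : keepPairs r f v = if r v (f v) then f v else v := rfl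

lemma involutive_keepPairs (hr : ∀ {u v}, r u v → r v u) (hf : Involutive f) :
    Involutive (keepPairs r f) :=
  involutive_piecewise hf (fun _ => rfl)
    (fun v (hv : r v (f v)) => show r (f v) (f (f v)) from (hf v).symm ▸ hr hv) (Set.mapsTo_id _)

end KeepPairs

/-- A symmetric nonnegative weight on the pairs of distinct vertices, encoded as a function of both
endpoints that vanishes on the diagonal. -/
structure IsEdgeWeight (w : V → V → ℝ) : Prop where
  symm : ∀ u v, w u v = w v u
  diag : ∀ v, w v v = 0
  nonneg : ∀ u v, 0 ≤ w u v

/-- The graph whose edges are the pairs of nonzero weight. -/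
def IsEdgeWeight.support {w : V → V → ℝ} (hw : IsEdgeWeight w) : SimpleGraph V where
  Adj u v := w u v ≠ 0
  symm := ⟨fun u v h => hw.symm u v ▸ h⟩
  loopless := ⟨fun v h => h (hw.diag v)⟩

/-- The weight counting, for a set of edges of `H`, the pairs of an edge and an endpoint of it
in `U`. -/
def coverWeight [DecidableEq V] (H : SimpleGraph V) [DecidableRel H.Adj] (U : Finset V) (u v : V) :
    ℝ :=
  (if u ∈ U ∧ H.Adj u v then 1 else 0) + if v ∈ U ∧ H.Adj v u then 1 else 0

section CoverWeight

variable [DecidableEq V] {H : SimpleGraph V} [DecidableRel H.Adj] {U : Finset V}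

lemma isEdgeWeight_coverWeight : IsEdgeWeight (coverWeight H U) where
  symm _ _ := add_comm _ _
  diag _ := by simp [coverWeight]
  nonneg _ _ := by unfold coverWeight; positivity

lemma coverWeight_eq_zero_of_not_adj {u v : V} (h : ¬H.Adj u v) : coverWeight H U u v = 0 := by
  simp [coverWeight, h, H.adj_comm v u]

lemma coverWeight_pos {u v : V} (hu : u ∈ U) (h : H.Adj u v) : 0 < coverWeight H U u v := by
  unfold coverWeight
  rw [if_pos ⟨hu, h⟩]
  positivity

end CoverWeight

variable [Fintype V]

/-- The weight of the matching encoded by the involution `f`, whose fixed points are the uncovered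
vertices; every pair `{v, f v}` is counted in both directions. -/
def matchingWeight (w : V → V → ℝ) (f : V → V) : ℝ :=
  ∑ v, w v (f v)

/-- An involution whose matching has maximum weight for `w`. -/
structure IsMaxWeightMatching (w : V → V → ℝ) (f : V → V) : Prop where
  involutive : Involutive f
  weight_le : ∀ g : V → V, Involutive g → matchingWeight w g ≤ matchingWeight w f

variable {w : V → V → ℝ} {f g : V → V}

lemma matchingWeight_flip (w : V → V → ℝ) (hf : Involutive f) :
    matchingWeight (fun u v => w v u) f = matchingWeight w f := by
  rw [matchingWeight, ← Equiv.sum_comp hf.toPerm]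
  simp [matchingWeight, hf _]

lemma matchingWeight_id (hw : IsEdgeWeight w) : matchingWeight w id = 0 := by
  simp [matchingWeight, hw.diag]

lemma matchingWeight_swap [DecidableEq V] (hw : IsEdgeWeight w) {u v : V} (huv : u ≠ v) :
    matchingWeight w (Equiv.swap u v) = 2 * w u v := by
  rw [matchingWeight, Fintype.sum_eq_add u v huv, Equiv.swap_apply_left, Equiv.swap_apply_right,
    hw.symm v u, two_mul]
  rintro a ⟨hau, hav⟩
  rw [Equiv.swap_apply_of_ne_of_ne hau hav, hw.diag]

lemma matchingWeight_piecewise_add (w : V → V → ℝ) (f g : V → V) (K : Set V)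
    [∀ a, Decidable (a ∈ K)] :
    matchingWeight w (K.piecewise f g) + matchingWeight w (K.piecewise g f) =
      matchingWeight w f + matchingWeight w g := by
  simp only [matchingWeight, ← sum_add_distrib]
  refine sum_congr rfl fun v _ => ?_
  by_cases hv : v ∈ K <;> simp [hv, add_comm]

lemma matchingWeight_keepPairs (hw : IsEdgeWeight w) [∀ u v, Decidable (hw.support.Adj u v)]
    (f : V → V) : matchingWeight w (keepPairs hw.support.Adj f) = matchingWeight w f := by
  refine sum_congr rfl fun v _ => ?_
  rw [keepPairs_apply]
  split_ifs with h
  · rfl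
  · rw [hw.diag, not_not.mp h]

lemma exists_isMaxWeightMatching (w : V → V → ℝ) : ∃ f, IsMaxWeightMatching w f := by
  obtain ⟨f, hf, hmax⟩ := Set.exists_max_image {f : V → V | Involutive f} (matchingWeight w)
    (Set.toFinite _) ⟨id, fun _ => rfl⟩
  exact ⟨f, hf, hmax⟩

namespace IsMaxWeightMatching

lemma keepPairs_support (hf : IsMaxWeightMatching w f) (hw : IsEdgeWeight w)
    [∀ u v, Decidable (hw.support.Adj u v)] :
    IsMaxWeightMatching w (keepPairs hw.support.Adj f) where
  involutive := involutive_keepPairs SimpleGraph.Adj.symm hf.involutive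
  weight_le g hg := (matchingWeight_keepPairs hw f).symm ▸ hf.weight_le g hg

lemma piecewise (hf : IsMaxWeightMatching w f) (hg : IsMaxWeightMatching w g) {K : Set V}
    [∀ a, Decidable (a ∈ K)] (hfK : Set.MapsTo f K K) (hgK : Set.MapsTo g K K) :
    IsMaxWeightMatching w (K.piecewise f g) where
  involutive := involutive_piecewise hf.involutive hg.involutive hfK hgK
  weight_le h hh := by
    have hsum := matchingWeight_piecewise_add w f g K
    have hle := hf.weight_le _ (involutive_piecewise hg.involutive hf.involutive hgK hfK)
    linarith [hg.weight_le h hh]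

lemma exists_isFixedPt_transfer (hf : IsMaxWeightMatching w f) (hg : IsMaxWeightMatching w g)
    {u v t : V} (huv : u ≠ v) (hfu : IsFixedPt f u) (hfv : IsFixedPt f v) (hgt : IsFixedPt g t) :
    ∃ h, IsMaxWeightMatching w h ∧ IsFixedPt h t ∧ (IsFixedPt h u ∨ IsFixedPt h v) := by
  classical
  set K := alternatingPath hf.involutive hg.involutive t
  have hfK : Set.MapsTo f K K := mapsTo_left_alternatingPath _ _ hgt
  have hgK : Set.MapsTo g K K := mapsTo_right_alternatingPath _ _ hgt
  have ht : t ∈ K := self_mem_alternatingPath _ _ t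
  refine ⟨K.piecewise g f, hg.piecewise hf hgK hfK, by simp [IsFixedPt, ht, hgt.eq], ?_⟩
  have hK : u ∉ K ∨ v ∉ K := by
    by_contra! h
    exact huv (eq_of_mem_alternatingPath_of_isFixedPt _ _ hgt h.1 h.2 hfu hfv)
  refine hK.imp (fun hu => ?_) fun hv => ?_
  · simp [IsFixedPt, hu, hfu.eq]
  · simp [IsFixedPt, hv, hfv.eq]

lemma not_adj_of_isFixedPt (hf : IsMaxWeightMatching w f) (hw : IsEdgeWeight w) {u v : V}
    (hfu : IsFixedPt f u) (hfv : IsFixedPt f v) : ¬hw.support.Adj u v := by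
  classical
  intro huv
  set K : Set V := {u, v}
  have hfK : Set.MapsTo f K K := by rintro _ (rfl | rfl) <;> simp [K, hfu.eq, hfv.eq]
  have hsK : Set.MapsTo (Equiv.swap u v) K K := by rintro _ (rfl | rfl) <;> simp [K]
  have hinv : Involutive (Equiv.swap u v) := fun a => Equiv.swap_apply_self u v a
  have hid : K.piecewise f (Equiv.swap u v) = id := by
    funext a
    by_cases ha : a ∈ K
    · obtain rfl | rfl := ha <;> simp [K, hfu.eq, hfv.eq]
    · obtain ⟨hau, hav⟩ : a ≠ u ∧ a ≠ v := by simpa [K] using ha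
      simp [ha, Equiv.swap_apply_of_ne_of_ne hau hav]
  have hsum := matchingWeight_piecewise_add w f (Equiv.swap u v) K
  rw [hid, matchingWeight_id hw, matchingWeight_swap hw huv.ne] at hsum
  have hle := hf.weight_le _ (involutive_piecewise hinv hf.involutive hsK hfK)
  exact huv (le_antisymm (by linarith) (hw.nonneg u v))

/-- Induction on a path from `u` to `v`: moving an uncovered vertex to the second vertex of the path
either uncovers both ends of an edge, so that the matching is not maximum, or leaves two uncovered
vertices joined by a shorter path. -/
lemma eq_of_reachable_of_isFixedPt (hw : IsEdgeWeight w)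
    (hmiss : ∀ t, ∃ g, IsMaxWeightMatching w g ∧ IsFixedPt g t) {u v : V}
    (huv : hw.support.Reachable u v) (hf : IsMaxWeightMatching w f)
    (hfu : IsFixedPt f u) (hfv : IsFixedPt f v) : u = v := by
  obtain ⟨p⟩ := huv
  induction p generalizing f with
  | nil => rfl
  | @cons u t v hut _ ih =>
    by_contra huv
    obtain ⟨g, hg, hgt⟩ := hmiss t
    obtain ⟨h, hh, hht, hhu | hhv⟩ := hf.exists_isFixedPt_transfer hg huv hfu hfv hgt
    · exact hh.not_adj_of_isFixedPt hw hhu hht hut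
    · exact hf.not_adj_of_isFixedPt hw hfu hfv (ih hh hht hhv ▸ hut)

end IsMaxWeightMatching

/-- A fractional matching of the complete graph on `V`, encoded as a symmetric stochastic matrix:
the diagonal entry `x v v` is the fraction of `v` that is left uncovered. The last field is
Edmonds' family of odd set inequalities. -/
structure IsFractionalMatching [DecidableEq V] (x : Matrix V V ℝ) : Prop where
  nonneg : ∀ u v, 0 ≤ x u v
  symm : ∀ u v, x u v = x v u
  row_sum : ∀ u, ∑ v, x u v = 1
  odd_set : ∀ U : Finset V, Odd #U → ∑ u ∈ U, ∑ v ∈ U.erase u, x u v ≤ #U - 1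

/-- The weight of a fractional matching; as in `matchingWeight`, every pair is counted in both
directions. -/
def fracWeight (w : V → V → ℝ) (x : Matrix V V ℝ) : ℝ :=
  ∑ u, ∑ v, w u v * x u v

lemma fracWeight_flip (w : V → V → ℝ) {x : Matrix V V ℝ} (hx : ∀ u v, x u v = x v u) :
    fracWeight (fun u v => w v u) x = fracWeight w x := by
  rw [fracWeight, sum_comm]
  simp only [fracWeight, hx]

section CoverWeight

variable [DecidableEq V] {H : SimpleGraph V} [DecidableRel H.Adj] {U : Finset V}

lemma matchingWeight_coverWeight (hf : Involutive f) :
    matchingWeight (coverWeight H U) f = 2 * #{v ∈ U | H.Adj v (f v)} := by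
  set k : V → V → ℝ := fun u v => if u ∈ U ∧ H.Adj u v then 1 else 0
  have hk : matchingWeight k f = #{v ∈ U | H.Adj v (f v)} := by
    simp [matchingWeight, k, filter_and, inter_filter]
  calc matchingWeight (coverWeight H U) f
      = matchingWeight k f + matchingWeight (fun u v => k v u) f := sum_add_distrib
    _ = 2 * #{v ∈ U | H.Adj v (f v)} := by rw [matchingWeight_flip k hf, hk, two_mul]

lemma fracWeight_coverWeight {x : Matrix V V ℝ} (hx : ∀ u v, x u v = x v u) :
    fracWeight (coverWeight H U) x = 2 * ∑ u ∈ U, ∑ v ∈ H.neighborFinset u, x u v := by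
  set k : V → V → ℝ := fun u v => if u ∈ U ∧ H.Adj u v then 1 else 0
  have hk : fracWeight k x = ∑ u ∈ U, ∑ v ∈ H.neighborFinset u, x u v := by
    simp [fracWeight, k, ite_and, neighborFinset_eq_filter, sum_filter, sum_ite_mem]
  calc fracWeight (coverWeight H U) x
      = fracWeight k x + fracWeight (fun u v => k v u) x := by
        simp only [fracWeight, coverWeight, k, add_mul, sum_add_distrib]
    _ = 2 * ∑ u ∈ U, ∑ v ∈ H.neighborFinset u, x u v := by
        rw [fracWeight_flip k hx, hk, two_mul]

end CoverWeight

namespace IsMaxWeightMatching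

lemma support_adj_of_not_isFixedPt (hf : IsMaxWeightMatching w f) (hw : IsEdgeWeight w) {a : V}
    (ha : ∀ g, IsMaxWeightMatching w g → ¬IsFixedPt g a) : hw.support.Adj a (f a) := by
  classical
  by_contra h
  exact ha _ (hf.keepPairs_support hw) (if_neg h)

variable (hw : IsEdgeWeight w) (hmiss : ∀ t, ∃ g, IsMaxWeightMatching w g ∧ IsFixedPt g t)
include hmiss

lemma odd_card_reachable (a : V) [DecidableRel hw.support.Reachable] :
    Odd #{v | hw.support.Reachable a v} := by
  classical
  set U : Finset V := {v | hw.support.Reachable a v}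
  obtain ⟨g, hg, hga⟩ := hmiss a
  set h := keepPairs hw.support.Adj g with h_def
  have hh : IsMaxWeightMatching w h := hg.keepPairs_support hw
  have hha : IsFixedPt h a := by simp [IsFixedPt, h, keepPairs_apply, hga.eq]
  have haU : a ∈ U := by simp [U]
  have hreach : ∀ v, hw.support.Reachable v (h v) := by
    intro v
    rw [h_def, keepPairs_apply]
    split_ifs with hv
    exacts [hv.reachable, .refl v]
  have hmem : ∀ {v}, v ∈ U.erase a ↔ v ≠ a ∧ hw.support.Reachable a v := by simp [U]
  have heven : Even #(U.erase a) := by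
    refine even_card_of_involution_without_fixedPoints (f := h) (fun v hv => hmem.mpr ?_)
      (fun v _ => hh.involutive v) fun v hv hfix => ?_
    · obtain ⟨hva, hav⟩ := hmem.mp hv
      refine ⟨fun hva' => hva ?_, hav.trans (hreach v)⟩
      rw [← hh.involutive v, hva', hha.eq]
    · obtain ⟨hva, hav⟩ := hmem.mp hv
      exact hva (eq_of_reachable_of_isFixedPt hw hmiss hav.symm hh hfix hha)
  rw [← card_erase_add_one haU]
  exact heven.add_one

lemma card_reachable_le (hf : IsMaxWeightMatching w f) (a : V)
    [DecidableRel hw.support.Reachable] [DecidableRel hw.support.Adj] :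
    #{v | hw.support.Reachable a v} ≤
      #{v ∈ ({v | hw.support.Reachable a v} : Finset V) | hw.support.Adj v (f v)} + 1 := by
  set U : Finset V := {v | hw.support.Reachable a v}
  have hone : #{v ∈ U | ¬hw.support.Adj v (f v)} ≤ 1 := by
    refine card_le_one.mpr fun u hu v hv => ?_
    obtain ⟨⟨hau, hu⟩, hav, hv⟩ : (hw.support.Reachable a u ∧ ¬hw.support.Adj u (f u)) ∧
        hw.support.Reachable a v ∧ ¬hw.support.Adj v (f v) := by simpa [U] using And.intro hu hv
    exact eq_of_reachable_of_isFixedPt hw hmiss (hau.symm.trans hav) (hf.keepPairs_support hw)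
      (if_neg hu) (if_neg hv)
  rw [← card_filter_add_card_filter_not (s := U) fun v => hw.support.Adj v (f v)]
  gcongr

end IsMaxWeightMatching

/-- If some vertex is covered by all maximum weight matchings, its degree equation is tight;
otherwise the odd set inequality of every component of the support is. -/
lemma IsFractionalMatching.exists_tight_set [DecidableEq V] {x : Matrix V V ℝ}
    (hx : IsFractionalMatching x) (hw : IsEdgeWeight w) [DecidableRel hw.support.Adj]
    (hw₀ : w ≠ 0) :
    ∃ U : Finset V, (∃ u ∈ U, ∃ v, hw.support.Adj u v) ∧ ∀ f, IsMaxWeightMatching w f →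
      ∑ u ∈ U, ∑ v ∈ hw.support.neighborFinset u, x u v ≤ #{v ∈ U | hw.support.Adj v (f v)} := by
  classical
  by_cases hmiss : ∀ t, ∃ g, IsMaxWeightMatching w g ∧ IsFixedPt g t
  · obtain ⟨a, b, hab⟩ : ∃ a b, hw.support.Adj a b := by
      by_contra! h
      exact hw₀ (funext₂ fun u v => not_not.mp (h u v))
    set U : Finset V := {v | hw.support.Reachable a v}
    refine ⟨U, ⟨a, by simp [U], b, hab⟩, fun f hf => ?_⟩
    calc ∑ u ∈ U, ∑ v ∈ hw.support.neighborFinset u, x u v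
        ≤ ∑ u ∈ U, ∑ v ∈ U.erase u, x u v := by
          refine sum_le_sum fun u hu => sum_le_sum_of_subset_of_nonneg (fun v hv => ?_)
            fun v _ _ => hx.nonneg u v
          have huv : hw.support.Adj u v := by simpa using hv
          have hau : hw.support.Reachable a u := by simpa [U] using hu
          simpa [U, huv.ne'] using hau.trans huv.reachable
      _ ≤ #U - 1 := hx.odd_set U (IsMaxWeightMatching.odd_card_reachable hw hmiss a)
      _ ≤ #{v ∈ U | hw.support.Adj v (f v)} := by
          rw [sub_le_iff_le_add]
          exact_mod_cast IsMaxWeightMatching.card_reachable_le hw hmiss hf a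
  · push Not at hmiss
    obtain ⟨a, ha⟩ := hmiss
    have hcov : ∀ f, IsMaxWeightMatching w f → hw.support.Adj a (f a) :=
      fun f hf => hf.support_adj_of_not_isFixedPt hw ha
    obtain ⟨g, hg⟩ := exists_isMaxWeightMatching w
    refine ⟨{a}, ⟨a, mem_singleton_self a, g a, hcov g hg⟩, fun f hf => ?_⟩
    calc ∑ u ∈ {a}, ∑ v ∈ hw.support.neighborFinset u, x u v
        = ∑ v ∈ hw.support.neighborFinset a, x a v := sum_singleton _ _
      _ ≤ ∑ v, x a v := sum_le_univ_sum_of_nonneg (hx.nonneg a)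
      _ = #{v ∈ {a} | hw.support.Adj v (f v)} := by
        rw [hx.row_sum, filter_singleton, if_pos (hcov f hf), card_singleton, Nat.cast_one]

lemma matchingWeight_sub_smul (w d : V → V → ℝ) (ε : ℝ) (f : V → V) :
    matchingWeight (w - ε • d) f = matchingWeight w f - ε * matchingWeight d f := by
  simp [matchingWeight, sum_sub_distrib, mul_sum]

lemma fracWeight_sub_smul (w d : V → V → ℝ) (ε : ℝ) (x : Matrix V V ℝ) :
    fracWeight (w - ε • d) x = fracWeight w x - ε * fracWeight d x := by
  simp [fracWeight, sub_mul, sum_sub_distrib, mul_sum, mul_assoc]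

lemma continuous_matchingWeight (f : V → V) :
    Continuous fun w : V → V → ℝ => matchingWeight w f := by
  unfold matchingWeight; fun_prop

lemma continuous_fracWeight (x : Matrix V V ℝ) :
    Continuous fun w : V → V → ℝ => fracWeight w x := by
  unfold fracWeight; fun_prop

/-- The edge weights that separate `x` from all matchings by a gap of at least `δ`. -/
def separatingWeights (x : Matrix V V ℝ) (δ : ℝ) : Set (V → V → ℝ) :=
  {w | IsEdgeWeight w ∧ ∀ f : V → V, Involutive f → matchingWeight w f + δ ≤ fracWeight w x}

lemma isClosed_separatingWeights (x : Matrix V V ℝ) (δ : ℝ) :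
    IsClosed (separatingWeights x δ) := by
  have hset : separatingWeights x δ = {w | (∀ u v, w u v = w v u) ∧ (∀ v, w v v = 0) ∧
      (∀ u v, 0 ≤ w u v) ∧
        ∀ f : V → V, Involutive f → matchingWeight w f + δ ≤ fracWeight w x} := by
    ext w
    exact ⟨fun ⟨h, hgap⟩ => ⟨h.symm, h.diag, h.nonneg, hgap⟩,
      fun ⟨hsymm, hdiag, hnonneg, hgap⟩ => ⟨⟨hsymm, hdiag, hnonneg⟩, hgap⟩⟩
  rw [hset]
  simp only [Set.ofPred_and, Set.ofPred_forall]
  refine .inter (isClosed_iInter fun u => isClosed_iInter fun v => ?_) <|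
    .inter (isClosed_iInter fun v => ?_) <|
    .inter (isClosed_iInter fun u => isClosed_iInter fun v => ?_) <|
    isClosed_iInter fun f => isClosed_iInter fun _ => ?_
  · exact isClosed_eq (by fun_prop) (by fun_prop)
  · exact isClosed_eq (by fun_prop) (by fun_prop)
  · exact isClosed_le (by fun_prop) (by fun_prop)
  · exact isClosed_le ((continuous_matchingWeight f).add continuous_const)
      (continuous_fracWeight x)

open Filter Topology in
lemma eventually_sub_smul_mem_separatingWeights {x : Matrix V V ℝ} {δ : ℝ} {d : V → V → ℝ}
    (hw : w ∈ separatingWeights x δ) (hd : IsEdgeWeight d) (hsupp : ∀ u v, w u v = 0 → d u v = 0)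
    (htight : ∀ f, IsMaxWeightMatching w f → fracWeight d x ≤ matchingWeight d f) :
    ∀ᶠ ε in 𝓝[>] (0 : ℝ), w - ε • d ∈ separatingWeights x δ := by
  have hpath : Tendsto (fun ε : ℝ => w - ε • d) (𝓝[>] 0) (𝓝 w) :=
    (Continuous.tendsto' (by fun_prop) 0 w (by simp)).mono_left nhdsWithin_le_nhds
  have hnonneg : ∀ᶠ ε in 𝓝[>] (0 : ℝ), ∀ u v, 0 ≤ (w - ε • d) u v := by
    refine eventually_all.mpr fun u => eventually_all.mpr fun v => ?_
    obtain h | h := (hw.1.nonneg u v).eq_or_lt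
    · exact .of_forall fun ε => by simp [← h, hsupp u v h.symm]
    · have huv := (hpath.apply_nhds u).apply_nhds v
      exact (huv.eventually_const_lt h).mono fun ε => le_of_lt
  have hgap : ∀ᶠ ε in 𝓝[>] (0 : ℝ), ∀ f : {f : V → V // Involutive f},
      matchingWeight (w - ε • d) f + δ ≤ fracWeight (w - ε • d) x := by
    classical
    refine eventually_all.mpr fun ⟨f, hf⟩ => ?_
    by_cases hmax : IsMaxWeightMatching w f
    · filter_upwards [self_mem_nhdsWithin] with ε hε
      rw [matchingWeight_sub_smul, fracWeight_sub_smul]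
      have hle := mul_le_mul_of_nonneg_left (htight f hmax) (le_of_lt hε)
      linarith [hw.2 f hf]
    · obtain ⟨g, hg⟩ := exists_isMaxWeightMatching w
      have hlt : matchingWeight w f + δ < fracWeight w x := by
        have hfg : matchingWeight w f < matchingWeight w g := by
          by_contra! h
          exact hmax ⟨hf, fun k hk => (hg.weight_le k hk).trans h⟩
        linarith [hw.2 g hg.involutive]
      exact ((((continuous_matchingWeight f).tendsto w).comp hpath |>.add_const δ).eventually_lt
        (((continuous_fracWeight x).tendsto w).comp hpath) hlt).mono fun ε => le_of_lt
  filter_upwards [hnonneg, hgap] with ε hε₁ hε₂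
  exact ⟨⟨fun u v => by simp [hw.1.symm u v, hd.symm u v],
    fun v => by simp [hw.1.diag, hd.diag], hε₁⟩, fun f hf => hε₂ ⟨f, hf⟩⟩

lemma IsFractionalMatching.exists_lt_mem_separatingWeights [DecidableEq V] {x : Matrix V V ℝ}
    (hx : IsFractionalMatching x) {δ : ℝ} (hδ : 0 < δ) (hw : w ∈ separatingWeights x δ) :
    ∃ w' ∈ separatingWeights x δ, w' < w := by
  classical
  have hw₀ : w ≠ 0 := by
    rintro rfl
    have h := hw.2 id fun _ => rfl
    simp only [matchingWeight, fracWeight, Pi.zero_apply, zero_mul, sum_const_zero] at h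
    linarith
  obtain ⟨U, ⟨u, hu, v, huv⟩, htight⟩ := hx.exists_tight_set hw.1 hw₀
  set d := coverWeight hw.1.support U
  have hd : IsEdgeWeight d := isEdgeWeight_coverWeight
  have hd_tight : ∀ f, IsMaxWeightMatching w f → fracWeight d x ≤ matchingWeight d f := by
    intro f hf
    rw [fracWeight_coverWeight hx.symm, matchingWeight_coverWeight hf.involutive]
    linarith [htight f hf]
  have hsupp : ∀ a b, w a b = 0 → d a b = 0 :=
    fun a b hab => coverWeight_eq_zero_of_not_adj (not_not.mpr hab)
  have heventually := eventually_sub_smul_mem_separatingWeights hw hd hsupp hd_tight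
  obtain ⟨ε, hmem, (hε : 0 < ε)⟩ := (heventually.and self_mem_nhdsWithin).exists
  have hd_pos : 0 < d := by
    refine lt_of_le_of_ne (fun a b => hd.nonneg a b) fun h => ?_
    exact (coverWeight_pos hu huv).ne (congr_fun₂ h u v)
  exact ⟨w - ε • d, hmem, sub_lt_self w (smul_pos hε hd_pos)⟩

lemma IsFractionalMatching.separatingWeights_eq_empty [DecidableEq V] {x : Matrix V V ℝ}
    (hx : IsFractionalMatching x) {δ : ℝ} (hδ : 0 < δ) : separatingWeights x δ = ∅ := by
  by_contra hne
  obtain ⟨w₀, hw₀⟩ := Set.nonempty_iff_ne_empty.mpr hne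
  have hcompact : IsCompact (Set.Icc 0 w₀ ∩ separatingWeights x δ) :=
    isCompact_Icc.inter_right (isClosed_separatingWeights x δ)
  obtain ⟨w, ⟨⟨-, hww₀⟩, hw⟩, hmin⟩ := hcompact.exists_isMinOn
    ⟨w₀, ⟨fun u v => hw₀.1.nonneg u v, le_rfl⟩, hw₀⟩
    (f := fun w => ∑ v, ∑ u, w u v) (by fun_prop)
  obtain ⟨w', hw', hlt⟩ := hx.exists_lt_mem_separatingWeights hδ hw
  have hle : ∑ v, ∑ u, w u v ≤ ∑ v, ∑ u, w' u v :=
    hmin ⟨⟨fun u v => hw'.1.nonneg u v, hlt.le.trans hww₀⟩, hw'⟩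
  have hsum_lt : ∑ v, ∑ u, w' u v < ∑ v, ∑ u, w u v := by
    simpa only [Finset.sum_apply] using Fintype.sum_strictMono (Fintype.sum_strictMono hlt)
  exact hle.not_gt hsum_lt

lemma IsFractionalMatching.exists_fracWeight_le_of_isEdgeWeight [DecidableEq V] {x : Matrix V V ℝ}
    (hx : IsFractionalMatching x) (hw : IsEdgeWeight w) :
    ∃ f : V → V, Involutive f ∧ fracWeight w x ≤ matchingWeight w f := by
  obtain ⟨f, hf⟩ := exists_isMaxWeightMatching w
  refine ⟨f, hf.involutive, ?_⟩
  by_contra! hlt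
  have hmem : w ∈ separatingWeights x (fracWeight w x - matchingWeight w f) :=
    ⟨hw, fun g hg => by linarith [hf.weight_le g hg]⟩
  exact (hx.separatingWeights_eq_empty (sub_pos.mpr hlt)).subset hmem

end MaximumWeight

section Polytope

variable {V : Type*}

/-- The change in the weight `c` when `u` and `v` are matched to each other instead of being left
uncovered, which weighs `c u u + c v v`. -/
def pairGain (c : V → V → ℝ) (u v : V) : ℝ :=
  c u v + c v u - c u u - c v v

lemma pairGain_comm (c : V → V → ℝ) (u v : V) : pairGain c u v = pairGain c v u := by
  unfold pairGain; ring

lemma pairGain_self (c : V → V → ℝ) (v : V) : pairGain c v v = 0 := by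
  unfold pairGain; ring

lemma isEdgeWeight_max_zero_pairGain (c : V → V → ℝ) :
    IsEdgeWeight fun u v => max 0 (pairGain c u v) where
  symm u v := by rw [pairGain_comm]
  diag v := by rw [pairGain_self, max_self]
  nonneg _ _ := le_max_left _ _

variable [Fintype V]

lemma matchingWeight_pairGain (c : V → V → ℝ) {f : V → V} (hf : Involutive f) :
    matchingWeight (pairGain c) f = 2 * (matchingWeight c f - ∑ v, c v v) := by
  have hswap := matchingWeight_flip c hf
  have hdiag : ∑ v, c (f v) (f v) = ∑ v, c v v := Equiv.sum_comp hf.toPerm fun v => c v v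
  simp only [matchingWeight] at hswap
  simp only [matchingWeight, pairGain, sum_add_distrib, sum_sub_distrib, hswap, hdiag]
  ring

lemma fracWeight_pairGain (c : V → V → ℝ) {x : Matrix V V ℝ} (hsymm : ∀ u v, x u v = x v u)
    (hrow : ∀ u, ∑ v, x u v = 1) :
    fracWeight (pairGain c) x = 2 * (fracWeight c x - ∑ v, c v v) := by
  have hdiag : fracWeight (fun u _ => c u u) x = ∑ v, c v v := by
    simp only [fracWeight, ← mul_sum, hrow, mul_one]
  have hdiag' := fracWeight_flip (fun u _ => c u u) hsymm
  have hswap := fracWeight_flip c hsymm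
  rw [hdiag] at hdiag'
  simp only [fracWeight] at hswap hdiag hdiag'
  simp only [fracWeight, pairGain, add_mul, sub_mul, sum_add_distrib, sum_sub_distrib, hswap,
    hdiag, hdiag']
  ring

lemma matchingWeight_keepPairs_pairGain (c : V → V → ℝ) [∀ u v, Decidable (0 < pairGain c u v)]
    (f : V → V) : matchingWeight (pairGain c) (keepPairs (fun u v => 0 < pairGain c u v) f) =
      matchingWeight (fun u v => max 0 (pairGain c u v)) f := by
  refine sum_congr rfl fun v _ => ?_
  rw [keepPairs_apply]
  split_ifs with h
  · exact (max_eq_right h.le).symm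
  · rw [pairGain_self, eq_comm]
    exact max_eq_left (not_lt.mp h)

lemma IsFractionalMatching.exists_fracWeight_le [DecidableEq V] {x : Matrix V V ℝ}
    (hx : IsFractionalMatching x) (c : V → V → ℝ) :
    ∃ f : V → V, Involutive f ∧ fracWeight c x ≤ matchingWeight c f := by
  classical
  obtain ⟨f, hf, hle⟩ :=
    hx.exists_fracWeight_le_of_isEdgeWeight (isEdgeWeight_max_zero_pairGain c)
  set g := keepPairs (fun u v => 0 < pairGain c u v) f
  have hg : Involutive g :=
    involutive_keepPairs (fun {u v} h => pairGain_comm c u v ▸ h) hf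
  have hgain : fracWeight (pairGain c) x ≤ matchingWeight (pairGain c) g :=
    calc fracWeight (pairGain c) x
        ≤ fracWeight (fun u v => max 0 (pairGain c u v)) x :=
          sum_le_sum fun u _ => sum_le_sum fun v _ =>
            mul_le_mul_of_nonneg_right (le_max_right _ _) (hx.nonneg u v)
      _ ≤ matchingWeight (fun u v => max 0 (pairGain c u v)) f := hle
      _ = matchingWeight (pairGain c) g := (matchingWeight_keepPairs_pairGain c f).symm
  rw [fracWeight_pairGain c hx.symm hx.row_sum, matchingWeight_pairGain c hg] at hgain
  exact ⟨g, hg, by linarith⟩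

variable [DecidableEq V]

lemma fracWeight_permMatrix (w : V → V → ℝ) (σ : Equiv.Perm V) :
    fracWeight w (σ.permMatrix ℝ) = matchingWeight w σ := by
  simp [fracWeight, matchingWeight, PEquiv.toMatrix_apply, Equiv.toPEquiv_apply]

lemma map_matrix_eq_fracWeight (φ : Matrix V V ℝ →ₗ[ℝ] ℝ) (x : Matrix V V ℝ) :
    φ x = fracWeight (fun u v => φ (Matrix.single u v 1)) x := by
  conv_lhs => rw [Matrix.matrix_eq_sum_single x]
  simp only [map_sum, fracWeight]
  refine sum_congr rfl fun u _ => sum_congr rfl fun v _ => ?_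
  rw [mul_comm, ← smul_eq_mul, ← map_smul, Matrix.smul_single, smul_eq_mul, mul_one]

/-- **Edmonds' matching polytope theorem**. -/
theorem IsFractionalMatching.mem_convexHull {x : Matrix V V ℝ} (hx : IsFractionalMatching x) :
    x ∈ convexHull ℝ ((fun σ : Equiv.Perm V => σ.permMatrix ℝ) '' {σ | Involutive σ}) := by
  have : LocallyConvexSpace ℝ (Matrix V V ℝ) :=
    inferInstanceAs (LocallyConvexSpace ℝ (V → V → ℝ))
  by_contra hmem
  obtain ⟨φ, b, hφ, hφx⟩ := geometric_hahn_banach_closed_point (convex_convexHull ℝ _)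
    (((Set.toFinite _).image _).isClosed_convexHull ℝ) hmem
  set c : V → V → ℝ := fun u v => φ (Matrix.single u v 1)
  obtain ⟨f, hf, hle⟩ := hx.exists_fracWeight_le c
  have hlt : φ x < φ x := calc
    φ x = fracWeight c x := map_matrix_eq_fracWeight φ.toLinearMap x
    _ ≤ matchingWeight c hf.toPerm := hle
    _ = φ (hf.toPerm.permMatrix ℝ) := by
      rw [← fracWeight_permMatrix]
      exact (map_matrix_eq_fracWeight φ.toLinearMap _).symm
    _ < b := hφ _ (subset_convexHull ℝ _ ⟨hf.toPerm, hf, rfl⟩)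
    _ < φ x := hφx
  exact lt_irrefl _ hlt

end Polytope

section PerfectMatchings

variable {V : Type*} [Fintype V] [DecidableEq V]

/-- The edge set `{s(v, f v)}` of the matching encoded by the involution `f`. -/
def matchingEdges (f : V → V) : Finset (Sym2 V) :=
  univ.image fun v => s(v, f v)

lemma mk_mem_matchingEdges {f : V → V} (hf : Involutive f) {u v : V} :
    s(u, v) ∈ matchingEdges f ↔ f u = v := by
  simp only [matchingEdges, mem_image, mem_univ, true_and, Sym2.eq_iff]
  constructor
  · rintro ⟨a, ⟨rfl, h⟩ | ⟨rfl, rfl⟩⟩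
    exacts [h, hf a]
  · exact fun h => ⟨u, Or.inl ⟨rfl, h⟩⟩

lemma existsUnique_mem_matchingEdges {f : V → V} (hf : Involutive f) (v : V) :
    ∃! e, e ∈ matchingEdges f ∧ v ∈ e := by
  refine ⟨s(v, f v), ⟨(mk_mem_matchingEdges hf).mpr rfl, Sym2.mem_mk_left _ _⟩, ?_⟩
  rintro e ⟨he, hv⟩
  obtain ⟨u, rfl⟩ := Sym2.mem_iff_exists.mp hv
  rw [(mk_mem_matchingEdges hf).mp he]

variable (G : SimpleGraph V) [DecidableRel G.Adj]

lemma matchingEdges_subset_edgeFinset {f : V → V} (hadj : ∀ v, G.Adj v (f v)) :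
    matchingEdges f ⊆ G.edgeFinset :=
  image_subset_iff.mpr fun v _ => by simpa using hadj v

/-- There is a finitely supported probability distribution on the perfect matchings of `G` under
which every edge of `G` is covered with probability `q`. -/
def HasUniformMatchingDistribution (q : ℝ) : Prop :=
  ∃ (k : ℕ) (M : Fin k → Finset (Sym2 V)) (p : Fin k → ℝ),
    (∀ i, M i ⊆ G.edgeFinset) ∧
    (∀ i, ∀ v : V, ∃! e, e ∈ M i ∧ v ∈ e) ∧
    (∀ i, 0 ≤ p i) ∧ (∑ i, p i = 1) ∧
    (∀ e ∈ G.edgeFinset, ∑ i ∈ univ.filter (fun i => e ∈ M i), p i = q)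

variable {G}

lemma hasUniformMatchingDistribution_of_fintype {ι : Type*} [Fintype ι] {σ : ι → V → V}
    {p : ι → ℝ} {q : ℝ} (hσ : ∀ i, Involutive (σ i)) (hadj : ∀ i v, G.Adj v (σ i v))
    (hp : ∀ i, 0 ≤ p i) (hp_sum : ∑ i, p i = 1)
    (hq : ∀ u v, G.Adj u v → ∑ i with σ i u = v, p i = q) :
    HasUniformMatchingDistribution G q := by
  let e : Fin (Fintype.card ι) ≃ ι := (Fintype.equivFin ι).symm
  refine ⟨Fintype.card ι, fun i => matchingEdges (σ (e i)), p ∘ e,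
    fun i => matchingEdges_subset_edgeFinset G (hadj (e i)),
    fun i => existsUnique_mem_matchingEdges (hσ (e i)), fun i => hp (e i),
    (e.sum_comp p).trans hp_sum, ?_⟩
  intro a ha
  induction a using Sym2.ind with
  | _ u v =>
    rw [← hq u v (by simpa using ha), sum_filter, sum_filter]
    simp only [mk_mem_matchingEdges (hσ _)]
    exact e.sum_comp fun i => if σ i u = v then p i else 0

lemma hasUniformMatchingDistribution_of_mem_convexHull {q : ℝ}
    (h : q • G.adjMatrix ℝ ∈
      convexHull ℝ ((fun σ : Equiv.Perm V => σ.permMatrix ℝ) '' {σ | Involutive σ})) :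
    HasUniformMatchingDistribution G q := by
  obtain ⟨ι, _, P, p, hP, -, hp, hp_sum, hcomb⟩ := eq_pos_convex_span_of_mem_convexHull h
  choose σ hσ hσP using fun i => hP (Set.mem_range_self i)
  have hentry : ∀ u v, ∑ i with σ i u = v, p i = q * G.adjMatrix ℝ u v := by
    intro u v
    have huv := congr_fun₂ hcomb u v
    simpa [Matrix.sum_apply, ← hσP, PEquiv.toMatrix_apply, Equiv.toPEquiv_apply, sum_filter]
      using huv
  refine hasUniformMatchingDistribution_of_fintype (σ := fun i => σ i) hσ (fun i v => ?_)
    (fun i => (hp i).le) hp_sum fun u v huv => by simp [hentry, huv]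
  by_contra hadj
  have hzero : ∑ j with σ j v = σ i v, p j = 0 := by simp [hentry, hadj]
  rw [sum_eq_zero_iff_of_nonneg fun j _ => (hp j).le] at hzero
  exact (hp i).ne' (hzero i (by simp))

end PerfectMatchings

section EdgeCuts

variable {V : Type*} {G : SimpleGraph V} [DecidableRel G.Adj]

lemma card_interedges_eq_sum (G : SimpleGraph V) [DecidableRel G.Adj] (U W : Finset V) :
    #(G.interedges U W) = ∑ u ∈ U, #{v ∈ W | G.Adj u v} := by
  simp only [interedges_def, card_filter, sum_product]

lemma even_card_interedges_self (G : SimpleGraph V) [DecidableRel G.Adj] (U : Finset V) :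
    Even #(G.interedges U U) := by
  refine even_card_of_involution_without_fixedPoints (f := Prod.swap) (fun e he => ?_)
    (fun e _ => e.swap_swap) fun e he h => ?_
  · exact (G.swap_mem_interedges_iff).mpr he
  · exact (G.mem_interedges_iff.mp he).2.2.ne (congrArg Prod.snd h)

variable [Fintype V] [DecidableEq V]

lemma card_interedges_self_add_card_interedges_compl {r : ℕ} (hreg : G.IsRegularOfDegree r)
    (U : Finset V) : #(G.interedges U U) + #(G.interedges U Uᶜ) = r * #U := by
  have hdeg : ∀ u ∈ U, #{v ∈ U | G.Adj u v} + #{v ∈ Uᶜ | G.Adj u v} = r := by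
    intro u _
    rw [← hreg u, ← card_neighborFinset_eq_degree, neighborFinset_eq_filter,
      ← card_union_of_disjoint (disjoint_filter_filter disjoint_compl_right), ← filter_union,
      union_compl]
  rw [card_interedges_eq_sum, card_interedges_eq_sum, ← sum_add_distrib, sum_congr rfl hdeg,
    sum_const, smul_eq_mul, mul_comm]

lemma odd_card_interedges_compl {r : ℕ} (hreg : G.IsRegularOfDegree r) (hr : Odd r)
    {U : Finset V} (hU : Odd #U) : Odd #(G.interedges U Uᶜ) := by
  have hsum := card_interedges_self_add_card_interedges_compl hreg U
  exact (Nat.odd_add'.mp (hsum ▸ hr.mul hU)).mpr (even_card_interedges_self G U)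

lemma isBridge_of_interedges_compl_eq_singleton {U : Finset V} {a b : V}
    (h : G.interedges U Uᶜ = {(a, b)}) : G.IsBridge s(a, b) := by
  have hab : (a, b) ∈ G.interedges U Uᶜ := h ▸ mem_singleton_self _
  obtain ⟨haU, hbU, -⟩ := G.mk_mem_interedges_iff.mp hab
  rw [isBridge_iff]
  rintro ⟨p⟩
  obtain ⟨d, -, hd₁, hd₂⟩ :=
    p.exists_boundary_dart (U : Set V) haU (by simpa using hbU)
  have hd := d.adj
  rw [deleteEdges_adj] at hd
  have hd_mem : (d.fst, d.snd) ∈ G.interedges U Uᶜ :=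
    G.mk_mem_interedges_iff.mpr ⟨hd₁, by simpa using hd₂, hd.1⟩
  rw [h, mem_singleton, Prod.mk.injEq] at hd_mem
  exact hd.2 (by rw [hd_mem.1, hd_mem.2]; rfl)

lemma three_le_card_interedges_compl {r : ℕ} (hreg : G.IsRegularOfDegree r) (hr : Odd r)
    (hbridge : ∀ e ∈ G.edgeSet, ¬G.IsBridge e) {U : Finset V} (hU : Odd #U) :
    3 ≤ #(G.interedges U Uᶜ) := by
  have hodd := odd_card_interedges_compl hreg hr hU
  have hone : #(G.interedges U Uᶜ) ≠ 1 := by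
    intro h
    obtain ⟨⟨a, b⟩, hab⟩ := card_eq_one.mp h
    have hadj : (a, b) ∈ G.interedges U Uᶜ := hab ▸ mem_singleton_self _
    exact hbridge s(a, b) (G.mk_mem_interedges_iff.mp hadj).2.2
      (isBridge_of_interedges_compl_eq_singleton hab)
  obtain ⟨m, hm⟩ := hodd
  omega

lemma isFractionalMatching_inv_smul_adjMatrix {r : ℕ} (hr : r ≠ 0) (hreg : G.IsRegularOfDegree r)
    (hcut : ∀ U : Finset V, Odd #U → r ≤ #(G.interedges U Uᶜ)) :
    IsFractionalMatching ((1 / r : ℝ) • G.adjMatrix ℝ) where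
  nonneg u v := by
    rw [Matrix.smul_apply, adjMatrix_apply]
    positivity
  symm u v := by simp [G.adj_comm]
  row_sum u := by
    have hr' : (r : ℝ) ≠ 0 := Nat.cast_ne_zero.mpr hr
    have hdeg : ∑ v, G.adjMatrix ℝ u v = r := by
      simp [← hreg u, ← card_neighborFinset_eq_degree, neighborFinset_eq_filter]
    simp only [Matrix.smul_apply, ← smul_sum, hdeg]
    exact one_div_mul_cancel hr'
  odd_set U hU := by
    have hinner : ∑ u ∈ U, ∑ v ∈ U.erase u, G.adjMatrix ℝ u v = #(G.interedges U U) := by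
      rw [card_interedges_eq_sum, Nat.cast_sum]
      refine sum_congr rfl fun u _ => ?_
      rw [sum_erase _ (by simp)]
      simp
    have hr' : (0 : ℝ) < r := Nat.cast_pos.mpr (Nat.pos_of_ne_zero hr)
    have hsum : (#(G.interedges U U) + #(G.interedges U Uᶜ) : ℝ) = r * #U :=
      mod_cast card_interedges_self_add_card_interedges_compl hreg U
    have hle : (r : ℝ) ≤ #(G.interedges U Uᶜ) := mod_cast hcut U hU
    simp only [Matrix.smul_apply, smul_eq_mul, ← mul_sum, hinner]
    rw [one_div_mul_eq_div, div_le_iff₀ hr']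
    linarith

/-- Seymour's theorem that the fractional chromatic index of an `r`-graph is `r`. -/
theorem hasUniformMatchingDistribution_of_isRegularOfDegree {r : ℕ} (hr : r ≠ 0)
    (hreg : G.IsRegularOfDegree r) (hcut : ∀ U : Finset V, Odd #U → r ≤ #(G.interedges U Uᶜ)) :
    HasUniformMatchingDistribution G (1 / r) :=
  hasUniformMatchingDistribution_of_mem_convexHull
    (isFractionalMatching_inv_smul_adjMatrix hr hreg hcut).mem_convexHull

end EdgeCuts

theorem distribution_over_perfect_matchings_cubic_two_edge_connected_general
    {V : Type*} [Fintype V] [DecidableEq V] {G : SimpleGraph V} [DecidableRel G.Adj]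
    (hcubic : G.IsRegularOfDegree 3) (hbridge : ∀ e ∈ G.edgeSet, ¬G.IsBridge e) :
    HasUniformMatchingDistribution G (1 / 3) :=
  mod_cast hasUniformMatchingDistribution_of_isRegularOfDegree three_ne_zero hcubic
    fun _ hU => three_le_card_interedges_compl hcubic (by decide) hbridge hU

/-- Every cubic 2-edge-connected simple graph admits a finite
distribution over perfect matchings such that every edge lies in a matching drawn
from this distribution with probability exactly `1/3`. -/
theorem distribution_over_perfect_matchings_cubic_two_edge_connected
    {V : Type*} [Fintype V] [DecidableEq V]
    (G : SimpleGraph V) [DecidableRel G.Adj]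
    (hcubic : ∀ v : V, G.degree v = 3)
    (hconn : G.Connected)
    (h2ec : ∀ e ∈ G.edgeSet, (G.deleteEdges {e}).Connected) :
    ∃ (k : ℕ) (M : Fin k → Finset (Sym2 V)) (p : Fin k → ℝ),
      (∀ i, M i ⊆ G.edgeFinset) ∧
      (∀ i, ∀ v : V, ∃! e, e ∈ M i ∧ v ∈ e) ∧
      (∀ i, 0 ≤ p i) ∧ (∑ i, p i = 1) ∧
      (∀ e ∈ G.edgeFinset,
        ∑ i ∈ Finset.univ.filter (fun i => e ∈ M i), p i = 1 / 3) :=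
  distribution_over_perfect_matchings_cubic_two_edge_connected_general hcubic <|
    Sym2.ind fun u v huv hbridge => isBridge_iff.mp hbridge ((h2ec s(u, v) huv).preconnected u v)
end
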